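/- arXiv:0810.1386 — 6 statements merged into one kernel-verified Lean document; each statement's English description precedes it below -/
import Mathlib

section
/- (Forced Noether's theorem.) Let L : ℝⁿ × ℝⁿ → ℝ be C², f_L : ℝⁿ × ℝⁿ × ℝᵐ → ℝⁿ continuous, and let φ : ℝ × ℝⁿ → ℝⁿ be a smooth one-parameter group of diffeomorphisms of ℝⁿ (φ(0,·) = id, φ(s+t,·) = φ(s, φ(t,·)), φ jointly smooth) with infinitesimal generator ξ_Q(q) = ∂_s φ(s,q)|_{s=0}. Suppose L is invariant under the tangent lift of the action, i.e. L(φ(s,q), D_qφ(s,q)·v) = L(q,v) for all s ∈ ℝ and (q,v) ∈ ℝⁿ × ℝⁿ. Let q : [0,T] → ℝⁿ be a C² solution of the forced Euler–Lagrange equations with continuous control u : [0,T] → ℝᵐ, and assume f_L(q(t),q̇(t),u(t)) · ξ_Q(q(t)) = 0 for all t ∈ [0,T]. Then the momentum map t ↦ D₂L(q(t),q̇(t)) · ξ_Q(q(t)) is constant on [0,T]. -/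
open scoped RealInnerProductSpace

noncomputable section

abbrev Evec (n : ℕ) := EuclideanSpace ℝ (Fin n)

/-!
Differentiating `L (φ (s, x), D_x φ (s, x) v) = L (x, v)` at `s = 0`, and exchanging `∂_s` with
`D_x`, gives the infinitesimal symmetry `D₁L (x, v) · ξ x + D₂L (x, v) · (Dξ x v) = 0`. Along a
forced solution, `d/dt (D₂L · ξ) = (D₁L + f) · ξ + D₂L · (Dξ q̇)`, which the symmetry reduces to the
power `f · ξ` of the force along the generator; this vanishes by hypothesis.
-/

open Filter Topology ContinuousLinearMap

section PartialDerivatives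

variable {𝕜 E F G : Type*} [NontriviallyNormedField 𝕜]
  [NormedAddCommGroup E] [NormedSpace 𝕜 E] [NormedAddCommGroup F] [NormedSpace 𝕜 F]
  [NormedAddCommGroup G] [NormedSpace 𝕜 G]

theorem fderiv_comp_prodMk_left {f : E × F → G} {x : E} {y : F}
    (hf : DifferentiableAt 𝕜 f (x, y)) :
    fderiv 𝕜 (fun x' => f (x', y)) x = fderiv 𝕜 f (x, y) ∘L inl 𝕜 E F :=
  (hf.hasFDerivAt.comp x (hasFDerivAt_prodMk_left x y)).fderiv

theorem fderiv_comp_prodMk_right {f : E × F → G} {x : E} {y : F}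
    (hf : DifferentiableAt 𝕜 f (x, y)) :
    fderiv 𝕜 (fun y' => f (x, y')) y = fderiv 𝕜 f (x, y) ∘L inr 𝕜 E F :=
  (hf.hasFDerivAt.comp y (hasFDerivAt_prodMk_right x y)).fderiv

theorem deriv_comp_prodMk_left {f : 𝕜 × E → F} {s : 𝕜} {x : E}
    (hf : DifferentiableAt 𝕜 f (s, x)) :
    deriv (fun r => f (r, x)) s = fderiv 𝕜 f (s, x) (1, 0) := by
  rw [← fderiv_apply_one_eq_deriv, fderiv_comp_prodMk_left hf, comp_apply, inl_apply]

theorem eventually_differentiableAt_of_contDiffAt_two {f : E → F} {x : E}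
    (hf : ContDiffAt 𝕜 2 f x) : ∀ᶠ y in 𝓝 x, DifferentiableAt 𝕜 f y :=
  (hf.eventually (by simp)).mono fun _ hy => hy.differentiableAt two_ne_zero

theorem differentiableAt_fderiv_of_contDiffAt_two {f : E → F} {x : E}
    (hf : ContDiffAt 𝕜 2 f x) : DifferentiableAt 𝕜 (fderiv 𝕜 f) x :=
  (hf.fderiv_right (m := 1) (by norm_num)).differentiableAt one_ne_zero

theorem hasFDerivAt_deriv_comp_prodMk_left {f : 𝕜 × E → F} {s : 𝕜} {x : E}
    (hf : ContDiffAt 𝕜 2 f (s, x)) :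
    HasFDerivAt (fun y => deriv (fun r => f (r, y)) s)
      ((fderiv 𝕜 (fderiv 𝕜 f) (s, x)).flip (1, 0) ∘L inr 𝕜 𝕜 E) x := by
  have deriv_eq : (fun y => deriv (fun r => f (r, y)) s) =ᶠ[𝓝 x]
      fun y => fderiv 𝕜 f (s, y) (1, 0) :=
    ((Continuous.prodMk_right s).tendsto x |>.eventually
      (eventually_differentiableAt_of_contDiffAt_two hf)).mono fun _ => deriv_comp_prodMk_left
  have hf' := (differentiableAt_fderiv_of_contDiffAt_two hf).hasFDerivAt.comp x
    (hasFDerivAt_prodMk_right s x)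
  exact ((apply 𝕜 F ((1 : 𝕜), (0 : E))).hasFDerivAt.comp x hf').congr_of_eventuallyEq deriv_eq

theorem hasDerivAt_fderiv_comp_prodMk_right {𝕜 E F : Type*} [RCLike 𝕜]
    [NormedAddCommGroup E] [NormedSpace 𝕜 E] [NormedAddCommGroup F] [NormedSpace 𝕜 F]
    {f : 𝕜 × E → F} {s : 𝕜} {x : E} (hf : ContDiffAt 𝕜 2 f (s, x)) (v : E) :
    HasDerivAt (fun r => fderiv 𝕜 (fun y => f (r, y)) x v)
      (fderiv 𝕜 (fun y => deriv (fun r => f (r, y)) s) x v) s := by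
  have fderiv_eq : (fun r => fderiv 𝕜 (fun y => f (r, y)) x v) =ᶠ[𝓝 s]
      fun r => fderiv 𝕜 f (r, x) (0, v) :=
    ((Continuous.prodMk_left x).tendsto s |>.eventually
      (eventually_differentiableAt_of_contDiffAt_two hf)).mono fun r hr => by
        simp only [fderiv_comp_prodMk_right hr, comp_apply, inr_apply]
  have hf' := (differentiableAt_fderiv_of_contDiffAt_two hf).hasFDerivAt.comp_hasDerivAt s
    ((hasDerivAt_id s).prodMk (hasDerivAt_const s x))
  have symm : fderiv 𝕜 (fderiv 𝕜 f) (s, x) (1, 0) (0, v) =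
      fderiv 𝕜 (fderiv 𝕜 f) (s, x) (0, v) (1, 0) :=
    hf.isSymmSndFDerivAt (by simp) (1, 0) (0, v)
  rw [(hasFDerivAt_deriv_comp_prodMk_left hf).fderiv, comp_apply, inr_apply, flip_apply, ← symm]
  exact ((apply 𝕜 F ((0 : 𝕜), v)).hasFDerivAt.comp_hasDerivAt s hf').congr_of_eventuallyEq fderiv_eq

end PartialDerivatives

section InfinitesimalSymmetry

variable {E F : Type*} [NormedAddCommGroup E] [NormedSpace ℝ E]
  [NormedAddCommGroup F] [NormedSpace ℝ F]

/-- The infinitesimal generator `ξ_Q` of a one-parameter family `φ (s, ·)` of self-maps of `E`: its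
velocity at `s = 0`, a vector field on `E`. -/
def infinitesimalGenerator (φ : ℝ × E → E) (x : E) : E :=
  deriv (fun s => φ (s, x)) 0

/-- The tangent lift of `φ (s, ·)` to `TE`, identified with `E × E` as pairs (position, velocity);
invariance of a Lagrangian is expressed through it. -/
def tangentLift (φ : ℝ × E → E) (s : ℝ) (z : E × E) : E × E :=
  (φ (s, z.1), fderiv ℝ (fun y => φ (s, y)) z.1 z.2)

variable {φ : ℝ × E → E}

theorem tangentLift_zero (hφ0 : ∀ x, φ (0, x) = x) (z : E × E) : tangentLift φ 0 z = z := by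
  simp [tangentLift, hφ0]

theorem differentiableAt_infinitesimalGenerator {x : E} (hφ : ContDiffAt ℝ 2 φ (0, x)) :
    DifferentiableAt ℝ (infinitesimalGenerator φ) x :=
  (hasFDerivAt_deriv_comp_prodMk_left hφ).differentiableAt

theorem hasDerivAt_tangentLift {x : E} (hφ : ContDiffAt ℝ 2 φ (0, x)) (v : E) :
    HasDerivAt (fun s => tangentLift φ s (x, v))
      (infinitesimalGenerator φ x, fderiv ℝ (infinitesimalGenerator φ) x v) 0 := by
  have hbase : DifferentiableAt ℝ (fun s => φ (s, x)) 0 :=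
    (hφ.differentiableAt two_ne_zero).comp (0 : ℝ)
      (hasFDerivAt_prodMk_left (0 : ℝ) x).differentiableAt
  exact hbase.hasDerivAt.prodMk (hasDerivAt_fderiv_comp_prodMk_right hφ v)

theorem fderiv_apply_infinitesimalGenerator_eq_zero {L : E × E → F} {x v : E}
    (hL : DifferentiableAt ℝ L (x, v)) (hφ : ContDiffAt ℝ 2 φ (0, x))
    (hφ0 : ∀ y, φ (0, y) = y)
    (hinv : ∀ᶠ s in 𝓝 0, L (tangentLift φ s (x, v)) = L (x, v)) :
    fderiv ℝ L (x, v)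
      (infinitesimalGenerator φ x, fderiv ℝ (infinitesimalGenerator φ) x v) = 0 := by
  have hderiv := hL.hasFDerivAt.comp_hasDerivAt_of_eq (0 : ℝ) (hasDerivAt_tangentLift hφ v)
    (tangentLift_zero hφ0 (x, v)).symm
  exact hderiv.unique ((hasDerivAt_const 0 (L (x, v))).congr_of_eventuallyEq hinv)

end InfinitesimalSymmetry

section Momentum

variable {E : Type*} [NormedAddCommGroup E] [InnerProductSpace ℝ E] [CompleteSpace E]

theorem inner_gradient_comp_prodMk_left {F : Type*} [NormedAddCommGroup F] [NormedSpace ℝ F]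
    {g : E × F → ℝ} {x : E} {y : F} (hg : DifferentiableAt ℝ g (x, y)) (w : E) :
    ⟪gradient (fun x' => g (x', y)) x, w⟫ = fderiv ℝ g (x, y) (w, 0) := by
  rw [inner_gradient_left, fderiv_comp_prodMk_left hg, comp_apply, inl_apply]

/-- The conjugate momentum `D₂L (x, v)` of a Lagrangian at `z = (x, v)`, as a vector of `E` by means
of the Riesz isomorphism. -/
def conjugateMomentum (L : E × E → ℝ) (z : E × E) : E :=
  gradient (fun v => L (z.1, v)) z.2

variable {L : E × E → ℝ}

theorem conjugateMomentum_eq_toDual_symm {z : E × E} (hL : DifferentiableAt ℝ L z) :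
    conjugateMomentum L z =
      (InnerProductSpace.toDual ℝ E).symm (fderiv ℝ L z ∘L inr ℝ E E) := by
  rw [conjugateMomentum, gradient, fderiv_comp_prodMk_right hL]

theorem inner_conjugateMomentum {z : E × E} (hL : DifferentiableAt ℝ L z) (w : E) :
    ⟪conjugateMomentum L z, w⟫ = fderiv ℝ L z (0, w) := by
  rw [conjugateMomentum_eq_toDual_symm hL, InnerProductSpace.toDual_symm_apply, comp_apply,
    inr_apply]

theorem differentiableAt_conjugateMomentum {z : E × E} (hL : ContDiffAt ℝ 2 L z) :
    DifferentiableAt ℝ (conjugateMomentum L) z := by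
  have hpartial : DifferentiableAt ℝ (fun z => fderiv ℝ L z ∘L inr ℝ E E) z :=
    (differentiableAt_fderiv_of_contDiffAt_two hL).clm_comp (differentiableAt_const _)
  have hRiesz :=
    (InnerProductSpace.toDual ℝ E).symm.toContinuousLinearEquiv.differentiableAt.comp z hpartial
  exact hRiesz.congr_of_eventuallyEq <|
    (eventually_differentiableAt_of_contDiffAt_two hL).mono fun _ =>
      conjugateMomentum_eq_toDual_symm

theorem hasDerivAt_inner_conjugateMomentum {q : ℝ → E} {t : ℝ} {ξ : E → E} {f : E}
    (hL : ContDiffAt ℝ 2 L (q t, deriv q t)) (hq : ContDiffAt ℝ 2 q t)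
    (hξ : DifferentiableAt ℝ ξ (q t))
    (hsymm : fderiv ℝ L (q t, deriv q t) (ξ (q t), fderiv ℝ ξ (q t) (deriv q t)) = 0)
    (hEL : gradient (fun x => L (x, deriv q t)) (q t)
      - deriv (fun s => conjugateMomentum L (q s, deriv q s)) t + f = 0) :
    HasDerivAt (fun s => ⟪conjugateMomentum L (q s, deriv q s), ξ (q s)⟫) ⟪f, ξ (q t)⟫ t := by
  have hLd : DifferentiableAt ℝ L (q t, deriv q t) := hL.differentiableAt two_ne_zero
  have hqd : DifferentiableAt ℝ q t := hq.differentiableAt two_ne_zero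
  have hq'd : DifferentiableAt ℝ (deriv q) t :=
    (hq.derivWithin (m := 1) (by norm_num)).differentiableAt one_ne_zero
  have hmomentum : DifferentiableAt ℝ (fun s => conjugateMomentum L (q s, deriv q s)) t :=
    DifferentiableAt.comp (g := conjugateMomentum L) t (differentiableAt_conjugateMomentum hL)
      (hqd.prodMk hq'd)
  have hgenerator : HasDerivAt (fun s => ξ (q s)) (fderiv ℝ ξ (q t) (deriv q t)) t :=
    hξ.hasFDerivAt.comp_hasDerivAt t hqd.hasDerivAt
  have newton : deriv (fun s => conjugateMomentum L (q s, deriv q s)) t =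
      gradient (fun x => L (x, deriv q t)) (q t) + f := by
    rw [sub_add_eq_add_sub, sub_eq_zero] at hEL
    exact hEL.symm
  have power : ⟪conjugateMomentum L (q t, deriv q t), fderiv ℝ ξ (q t) (deriv q t)⟫ +
      ⟪deriv (fun s => conjugateMomentum L (q s, deriv q s)) t, ξ (q t)⟫ = ⟪f, ξ (q t)⟫ := by
    rw [newton, inner_add_left, inner_conjugateMomentum hLd, inner_gradient_comp_prodMk_left hLd,
      ← add_assoc, ← map_add, Prod.mk_add_mk, zero_add, add_zero, hsymm, zero_add]
  exact power ▸ hmomentum.hasDerivAt.inner ℝ hgenerator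

end Momentum

theorem eq_of_hasDerivAt_zero_of_convex {F : Type*} [NormedAddCommGroup F] [NormedSpace ℝ F]
    {g : ℝ → F} {I : Set ℝ} (hI : Convex ℝ I) (hg : ∀ t ∈ I, HasDerivAt g 0 t)
    {t₁ t₂ : ℝ} (ht₁ : t₁ ∈ I) (ht₂ : t₂ ∈ I) : g t₁ = g t₂ := by
  have hbound := hI.norm_image_sub_le_of_norm_hasDerivWithin_le (C := 0)
    (fun t ht => (hg t ht).hasDerivWithinAt) (fun _ _ => norm_zero.le) ht₂ ht₁
  rwa [zero_mul, norm_le_zero_iff, sub_eq_zero] at hbound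

theorem stmt_2_general {E : Type*} [NormedAddCommGroup E] [InnerProductSpace ℝ E] [CompleteSpace E]
    {I : Set ℝ} (hI : Convex ℝ I) {L : E × E → ℝ} (hL : ContDiff ℝ 2 L)
    {φ : ℝ × E → E} (hφ : ContDiff ℝ 2 φ) (hφ0 : ∀ x, φ (0, x) = x)
    (hinv : ∀ z, ∀ᶠ s in 𝓝 0, L (tangentLift φ s z) = L z)
    {q : ℝ → E} (hq : ∀ t ∈ I, ContDiffAt ℝ 2 q t) {f : ℝ → E}
    (hEL : ∀ t ∈ I, gradient (fun x => L (x, deriv q t)) (q t)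
      - deriv (fun s => conjugateMomentum L (q s, deriv q s)) t + f t = 0)
    (horth : ∀ t ∈ I, ⟪f t, infinitesimalGenerator φ (q t)⟫ = 0)
    {t₁ t₂ : ℝ} (ht₁ : t₁ ∈ I) (ht₂ : t₂ ∈ I) :
    ⟪conjugateMomentum L (q t₁, deriv q t₁), infinitesimalGenerator φ (q t₁)⟫ =
      ⟪conjugateMomentum L (q t₂, deriv q t₂), infinitesimalGenerator φ (q t₂)⟫ := by
  refine eq_of_hasDerivAt_zero_of_convex
    (g := fun t => ⟪conjugateMomentum L (q t, deriv q t), infinitesimalGenerator φ (q t)⟫)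
    hI (fun t ht => ?_) ht₁ ht₂
  have hsymm := fderiv_apply_infinitesimalGenerator_eq_zero (hL.differentiable two_ne_zero _)
    hφ.contDiffAt hφ0 (hinv (q t, deriv q t))
  exact horth t ht ▸ hasDerivAt_inner_conjugateMomentum hL.contDiffAt (hq t ht)
    (differentiableAt_infinitesimalGenerator hφ.contDiffAt) hsymm (hEL t ht)

/-- Forced Noether's theorem: if the forcing is orthogonal to the group action,
the momentum map is constant along solutions of the forced Euler–Lagrange
equations. -/
theorem stmt_2 {n m : ℕ} (T : ℝ) (hT : 0 < T)
    (L : Evec n × Evec n → ℝ) (hL : ContDiff ℝ 2 L)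
    (fL : Evec n × Evec n × Evec m → Evec n) (hfL : Continuous fL)
    (φ : ℝ × Evec n → Evec n) (hφ : ContDiff ℝ (⊤ : ℕ∞) φ)
    (hφ0 : ∀ x, φ (0, x) = x)
    (hφgrp : ∀ s t : ℝ, ∀ x, φ (s + t, x) = φ (s, φ (t, x)))
    (ξ : Evec n → Evec n) (hξ : ∀ x, ξ x = deriv (fun s => φ (s, x)) 0)
    (hinv : ∀ (s : ℝ) (x v : Evec n),
      L (φ (s, x), fderiv ℝ (fun y => φ (s, y)) x v) = L (x, v))
    (u : ℝ → Evec m) (hu : Continuous u)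
    (q : ℝ → Evec n) (hq : ContDiff ℝ 2 q)
    (hEL : ∀ t ∈ Set.Icc (0:ℝ) T,
      gradient (fun x => L (x, deriv q t)) (q t)
        - deriv (fun s => gradient (fun v => L (q s, v)) (deriv q s)) t
        + fL (q t, deriv q t, u t) = 0)
    (horth : ∀ t ∈ Set.Icc (0:ℝ) T, ⟪fL (q t, deriv q t, u t), ξ (q t)⟫ = 0) :
    ∀ t₁ ∈ Set.Icc (0:ℝ) T, ∀ t₂ ∈ Set.Icc (0:ℝ) T,
      ⟪gradient (fun v => L (q t₁, v)) (deriv q t₁), ξ (q t₁)⟫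
        = ⟪gradient (fun v => L (q t₂, v)) (deriv q t₂), ξ (q t₂)⟫ := by
  obtain rfl : ξ = infinitesimalGenerator φ := funext hξ
  exact fun t₁ ht₁ t₂ ht₂ => stmt_2_general (convex_Icc 0 T) hL (hφ.of_le (by norm_cast)) hφ0
    (fun z => .of_forall fun s => hinv s z.1 z.2) (fun _ _ => hq.contDiffAt) hEL horth ht₁ ht₂
end
end

section
/- Let L_d : ℝⁿ × ℝⁿ → ℝ be differentiable, let φ : ℝ × ℝⁿ → ℝⁿ be a smooth one-parameter group of diffeomorphisms of ℝⁿ with infinitesimal generator ξ_Q(q) = ∂_s φ(s,q)|_{s=0}, and suppose L_d is invariant under the diagonal action: L_d(φ(s,q₀), φ(s,q₁)) = L_d(q₀,q₁) for all s, q₀, q₁. Let (q₀, …, q_N) satisfy the forced discrete Euler–Lagrange equations with discrete forces f_k⁻, f_k⁺ ∈ ℝⁿ (k = 0, …, N−1). Then (D₂L_d(q_{N−1},q_N) + f_{N−1}⁺) · ξ_Q(q_N) − (−D₁L_d(q₀,q₁) − f₀⁻) · ξ_Q(q₀) = Σ_{k=0}^{N−1} [f_k⁻ · ξ_Q(q_k)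 + f_k⁺ · ξ_Q(q_{k+1})]. -/
open scoped RealInnerProductSpace

noncomputable section

/-!
Write `p⁺ₖ = D₂L(qₖ, qₖ₊₁) + fₖ⁺` and `p⁻ₖ = -D₁L(qₖ, qₖ₊₁) - fₖ⁻`. Differentiating the invariance
of `L` at `s = 0` gives `⟪p⁺ₖ, ξ qₖ₊₁⟫ - ⟪p⁻ₖ, ξ qₖ⟫ = ⟪fₖ⁻, ξ qₖ⟫ + ⟪fₖ⁺, ξ qₖ₊₁⟫`. The forced
discrete Euler–Lagrange equations say `p⁺ₖ = p⁻ₖ₊₁`, so these identities telescope when summed.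
-/

open scoped Topology Gradient

theorem sum_range_succ_sub_of_matching {G : Type*} [AddCommGroup G] {a b : ℕ → G} {N : ℕ}
    (h : ∀ k < N, a k = b (k + 1)) :
    ∑ k ∈ Finset.range (N + 1), (a k - b k) = a N - b 0 := by
  have interior : ∑ k ∈ Finset.range N, a k = ∑ k ∈ Finset.range N, b (k + 1) :=
    Finset.sum_congr rfl fun k hk => h k (Finset.mem_range.mp hk)
  rw [Finset.sum_sub_distrib, Finset.sum_range_succ a, Finset.sum_range_succ' b, interior,
    add_sub_add_left_eq_sub]

section FrechetDerivatives

variable {𝕜 E F G : Type*} [NontriviallyNormedField 𝕜] [NormedAddCommGroup E] [NormedSpace 𝕜 E]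
  [NormedAddCommGroup F] [NormedSpace 𝕜 F] [NormedAddCommGroup G] [NormedSpace 𝕜 G]

theorem fderiv_apply_eq_zero_of_eventually_const {f : E → F} {γ : 𝕜 → E} {v : E} {c : F} {t : 𝕜}
    (hf : DifferentiableAt 𝕜 f (γ t)) (hγ : HasDerivAt γ v t)
    (hconst : ∀ᶠ s in 𝓝 t, f (γ s) = c) :
    fderiv 𝕜 f (γ t) v = 0 :=
  (hf.hasFDerivAt.comp_hasDerivAt t hγ).unique ((hasDerivAt_const t c).congr_of_eventuallyEq hconst)

theorem fderiv_apply_generator_eq_zero {f : E × E → F} {φ : 𝕜 → E → E} {ξ : E → E} {x y : E}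
    (hf : DifferentiableAt 𝕜 f (x, y)) (hφ0 : ∀ z, φ 0 z = z)
    (hξ : ∀ z, HasDerivAt (fun s => φ s z) (ξ z) 0)
    (hinv : ∀ᶠ s in 𝓝 0, f (φ s x, φ s y) = f (x, y)) :
    fderiv 𝕜 f (x, y) (ξ x, ξ y) = 0 := by
  have base : (φ 0 x, φ 0 y) = (x, y) := by rw [hφ0, hφ0]
  have orbit : HasDerivAt (fun s => (φ s x, φ s y)) (ξ x, ξ y) 0 := (hξ x).prodMk (hξ y)
  rw [← base] at hf ⊢
  exact fderiv_apply_eq_zero_of_eventually_const hf orbit hinv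

theorem fderiv_apply_prodMk {f : E × F → G} {x : E} {y : F} (hf : DifferentiableAt 𝕜 f (x, y))
    (u : E) (v : F) :
    fderiv 𝕜 f (x, y) (u, v)
      = fderiv 𝕜 (fun z => f (z, y)) x u + fderiv 𝕜 (fun z => f (x, z)) y v := by
  have partial_fst : HasFDerivAt (fun z => f (z, y)) (fderiv 𝕜 f (x, y) ∘L .inl 𝕜 E F) x :=
    hf.hasFDerivAt.comp x (hasFDerivAt_prodMk_left x y)
  have partial_snd : HasFDerivAt (fun z => f (x, z)) (fderiv 𝕜 f (x, y) ∘L .inr 𝕜 E F) y :=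
    hf.hasFDerivAt.comp y (hasFDerivAt_prodMk_right x y)
  rw [partial_fst.fderiv, partial_snd.fderiv]
  exact ((fderiv 𝕜 f (x, y)).comp_inl_add_comp_inr (u, v)).symm

end FrechetDerivatives

theorem inner_gradient_fst_add_inner_gradient_snd {𝕜 E F : Type*} [RCLike 𝕜]
    [NormedAddCommGroup E] [InnerProductSpace 𝕜 E] [CompleteSpace E]
    [NormedAddCommGroup F] [InnerProductSpace 𝕜 F] [CompleteSpace F]
    {f : E × F → 𝕜} {x : E} {y : F} (hf : DifferentiableAt 𝕜 f (x, y)) (u : E) (v : F) :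
    inner 𝕜 (∇ (fun z => f (z, y)) x) u + inner 𝕜 (∇ (fun z => f (x, z)) y) v
      = fderiv 𝕜 f (x, y) (u, v) := by
  rw [inner_gradient_left, inner_gradient_left, fderiv_apply_prodMk hf]

section DiscreteMechanics

variable {E : Type*} [NormedAddCommGroup E] [InnerProductSpace ℝ E] [CompleteSpace E]
  {L : E × E → ℝ}

/-- The momentum `p⁺ = D₂L(x, y) + f⁺` that the forced discrete Legendre transform of `L` assigns
to the endpoint `y` of the step `(x, y)`, as a vector via the Riesz isomorphism. -/
def endMomentum (L : E × E → ℝ) (fPlus x y : E) : E :=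
  ∇ (fun z => L (x, z)) y + fPlus

/-- The momentum `p⁻ = -D₁L(x, y) - f⁻` that the forced discrete Legendre transform of `L` assigns
to the starting point `x` of the step `(x, y)`, as a vector via the Riesz isomorphism. -/
def startMomentum (L : E × E → ℝ) (fMinus x y : E) : E :=
  -∇ (fun z => L (z, y)) x - fMinus

theorem endMomentum_eq_startMomentum_iff {fPlus fMinus x y z : E} :
    endMomentum L fPlus x y = startMomentum L fMinus y z ↔
      ∇ (fun w => L (x, w)) y + ∇ (fun w => L (w, z)) y + fPlus + fMinus = 0 := by
  rw [endMomentum, startMomentum, ← sub_eq_zero]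
  abel_nf

theorem inner_endMomentum_sub_inner_startMomentum {x y u v : E}
    (hL : DifferentiableAt ℝ L (x, y)) (huv : fderiv ℝ L (x, y) (u, v) = 0) (fMinus fPlus : E) :
    ⟪endMomentum L fPlus x y, v⟫ - ⟪startMomentum L fMinus x y, u⟫
      = ⟪fMinus, u⟫ + ⟪fPlus, v⟫ := by
  rw [← inner_gradient_fst_add_inner_gradient_snd hL] at huv
  simp only [endMomentum, startMomentum, inner_add_left, inner_sub_left, inner_neg_left]
  linarith

theorem stmt_5_general (hL : Differentiable ℝ L) {φ : ℝ → E → E} (hφ0 : ∀ x, φ 0 x = x)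
    {ξ : E → E} (hξ : ∀ x, HasDerivAt (fun s => φ s x) (ξ x) 0)
    (hinv : ∀ x y, ∀ᶠ s in 𝓝 0, L (φ s x, φ s y) = L (x, y))
    {N : ℕ} (hN : 1 ≤ N) (q fMinus fPlus : ℕ → E)
    (hDEL : ∀ k, 1 ≤ k → k < N →
      ∇ (fun y => L (q (k - 1), y)) (q k) + ∇ (fun x => L (x, q (k + 1))) (q k)
        + fPlus (k - 1) + fMinus k = 0) :
    ⟪∇ (fun y => L (q (N - 1), y)) (q N) + fPlus (N - 1), ξ (q N)⟫
      - ⟪-∇ (fun x => L (x, q 1)) (q 0) - fMinus 0, ξ (q 0)⟫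
      = ∑ k ∈ Finset.range N, (⟪fMinus k, ξ (q k)⟫ + ⟪fPlus k, ξ (q (k + 1))⟫) := by
  obtain ⟨m, rfl⟩ := Nat.exists_eq_add_of_le' hN
  let jPlus k := ⟪endMomentum L (fPlus k) (q k) (q (k + 1)), ξ (q (k + 1))⟫
  let jMinus k := ⟪startMomentum L (fMinus k) (q k) (q (k + 1)), ξ (q k)⟫
  have matching : ∀ k < m, jPlus k = jMinus (k + 1) := fun k hk =>
    congrArg (⟪·, ξ (q (k + 1))⟫) <|
      endMomentum_eq_startMomentum_iff.mpr (hDEL (k + 1) (by lia) (by lia))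
  have balance (k : ℕ) : jPlus k - jMinus k = ⟪fMinus k, ξ (q k)⟫ + ⟪fPlus k, ξ (q (k + 1))⟫ :=
    inner_endMomentum_sub_inner_startMomentum (hL _)
      (fderiv_apply_generator_eq_zero (hL _) hφ0 hξ (hinv _ _)) _ _
  calc
    _ = jPlus m - jMinus 0 := rfl
    _ = ∑ k ∈ Finset.range (m + 1), (jPlus k - jMinus k) :=
      (sum_range_succ_sub_of_matching matching).symm
    _ = _ := Finset.sum_congr rfl fun k _ => balance k

end DiscreteMechanics

/-- Evolution of the discrete momentum map: for a discrete trajectory of the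
forced discrete Euler–Lagrange equations with a symmetry of the discrete
Lagrangian, the change of the discrete momentum map equals the sum of the
discrete virtual work terms. -/
theorem stmt_5 {n : ℕ} (Ld : Evec n × Evec n → ℝ) (hLd : Differentiable ℝ Ld)
    (φ : ℝ × Evec n → Evec n) (hφ : ContDiff ℝ (⊤ : ℕ∞) φ)
    (hφ0 : ∀ x, φ (0, x) = x)
    (hφgrp : ∀ s t : ℝ, ∀ x, φ (s + t, x) = φ (s, φ (t, x)))
    (ξ : Evec n → Evec n) (hξ : ∀ x, ξ x = deriv (fun s => φ (s, x)) 0)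
    (hinv : ∀ (s : ℝ) (x y : Evec n), Ld (φ (s, x), φ (s, y)) = Ld (x, y))
    (N : ℕ) (hN : 1 ≤ N)
    (q : ℕ → Evec n) (fm fp : ℕ → Evec n)
    (hDEL : ∀ k, 1 ≤ k → k < N →
      gradient (fun y => Ld (q (k-1), y)) (q k)
        + gradient (fun x => Ld (x, q (k+1))) (q k)
        + fp (k-1) + fm k = 0) :
    ⟪gradient (fun y => Ld (q (N-1), y)) (q N) + fp (N-1), ξ (q N)⟫
      - ⟪-gradient (fun x => Ld (x, q 1)) (q 0) - fm 0, ξ (q 0)⟫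
      = ∑ k ∈ Finset.range N, (⟪fm k, ξ (q k)⟫ + ⟪fp k, ξ (q (k+1))⟫) := by
  have hφ' : Differentiable ℝ φ := hφ.differentiable (by simp)
  exact stmt_5_general hLd (φ := fun s x => φ (s, x)) hφ0
    (fun x => hξ x ▸ DifferentiableAt.hasDerivAt (by fun_prop))
    (fun x y => .of_forall fun s => hinv s x y) hN q fm fp hDEL
end
end

section
/- (Forced discrete Noether's theorem.) Let L_d : ℝⁿ × ℝⁿ → ℝ be differentiable, let φ : ℝ × ℝⁿ → ℝⁿ be a smooth one-parameter group of diffeomorphisms of ℝⁿ with infinitesimal generator ξ_Q(q) = ∂_s φ(s,q)|_{s=0}, and suppose L_d(φ(s,q₀), φ(s,q₁)) = L_d(q₀,q₁) for all s, q₀, q₁. Let (q₀, …, q_N) satisfy the forced discrete Euler–Lagrange equations with discrete forces f_k⁻, f_k⁺ ∈ ℝⁿ (k = 0, …, N−1), and assume the forcing is orthogonal to the group action: f_k⁻ · ξ_Q(q_k) + f_k⁺ · ξ_Q(q_{k+1}) = 0 for all k = 0, …, N−1. Then the discrete momentum map is preserved: the quantity J_k := (−D₁L_d(q_k,q_{k+1})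 − f_k⁻) · ξ_Q(q_k) is independent of k ∈ {0, …, N−1}, and moreover J_k = (D₂L_d(q_k,q_{k+1}) + f_k⁺) · ξ_Q(q_{k+1}) for every k. -/
open scoped RealInnerProductSpace

noncomputable section

/-!
The forced discrete Euler–Lagrange equations say that the momentum with which one discrete step
ends is the momentum with which the next one begins. Within a single step, differentiating the
invariance of `L_d` along the orbit gives `D₁L_d · ξ(x) + D₂L_d · ξ(y) = 0`; since the forces do no
work along `ξ`, the pairing of the momentum with `ξ` is the same at both ends of the step.
-/

open scoped Topology

section Calculus

variable {E F : Type*} [NormedAddCommGroup E] [NormedAddCommGroup F]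

theorem fderiv_apply_eq_zero_of_eventuallyEq_const [NormedSpace ℝ E] [NormedSpace ℝ F]
    {f : E → F} {γ : ℝ → E} {x v : E} {t : ℝ} {c : F} (hf : DifferentiableAt ℝ f x)
    (hγ : HasDerivAt γ v t) (hx : γ t = x) (hc : f ∘ γ =ᶠ[𝓝 t] fun _ => c) :
    fderiv ℝ f x v = 0 :=
  (hf.hasFDerivAt.comp_hasDerivAt_of_eq t hγ hx.symm).unique
    ((hasDerivAt_const t c).congr_of_eventuallyEq hc)

variable [InnerProductSpace ℝ E] [InnerProductSpace ℝ F] {f : E × F → ℝ} {x : E} {y : F}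

theorem inner_gradient_prodMk_left [CompleteSpace E] (hf : DifferentiableAt ℝ f (x, y)) (v : E) :
    ⟪gradient (fun z => f (z, y)) x, v⟫ = fderiv ℝ f (x, y) (v, 0) := by
  have hslice : HasFDerivAt (fun z => f (z, y)) _ x :=
    hf.hasFDerivAt.comp x (hasFDerivAt_prodMk_left x y)
  rw [inner_gradient_left, hslice.fderiv]
  simp

theorem inner_gradient_prodMk_right [CompleteSpace F] (hf : DifferentiableAt ℝ f (x, y)) (w : F) :
    ⟪gradient (fun z => f (x, z)) y, w⟫ = fderiv ℝ f (x, y) (0, w) := by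
  have hslice : HasFDerivAt (fun z => f (x, z)) _ y :=
    hf.hasFDerivAt.comp y (hasFDerivAt_prodMk_right x y)
  rw [inner_gradient_left, hslice.fderiv]
  simp

theorem inner_gradient_add_inner_gradient [CompleteSpace E] [CompleteSpace F]
    (hf : DifferentiableAt ℝ f (x, y)) (v : E) (w : F) :
    ⟪gradient (fun z => f (z, y)) x, v⟫ + ⟪gradient (fun z => f (x, z)) y, w⟫
      = fderiv ℝ f (x, y) (v, w) := by
  rw [inner_gradient_prodMk_left hf, inner_gradient_prodMk_right hf, ← map_add,
    Prod.mk_add_mk, add_zero, zero_add]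

end Calculus

section DiscreteMechanics

variable {E : Type*} [NormedAddCommGroup E] [InnerProductSpace ℝ E] [CompleteSpace E]

/-- The forced discrete Legendre transform `𝔽⁻L_d(x, y) = -D₁L_d(x, y) - f⁻`: the momentum at the
initial point `x` of a discrete step from `x` to `y`, where `f` is the value of the force `f⁻` on
that step. -/
def initialMomentum (Ld : E × E → ℝ) (f x y : E) : E :=
  -gradient (fun z => Ld (z, y)) x - f

/-- The forced discrete Legendre transform `𝔽⁺L_d(x, y) = D₂L_d(x, y) + f⁺`: the momentum at the
final point `y` of a discrete step from `x` to `y`, where `f` is the value of the force `f⁺` on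
that step. -/
def finalMomentum (Ld : E × E → ℝ) (f x y : E) : E :=
  gradient (fun z => Ld (x, z)) y + f

variable {Ld : E × E → ℝ} {x y z : E}

theorem initialMomentum_eq_finalMomentum_iff {fm fp : E} :
    initialMomentum Ld fm y z = finalMomentum Ld fp x y ↔
      gradient (fun w => Ld (x, w)) y + gradient (fun w => Ld (w, z)) y + fp + fm = 0 := by
  rw [eq_comm, ← sub_eq_zero, initialMomentum, finalMomentum]
  abel_nf

theorem inner_initialMomentum_eq_inner_finalMomentum {fm fp v w : E}
    (hLd : DifferentiableAt ℝ Ld (x, y)) (hsymm : fderiv ℝ Ld (x, y) (v, w) = 0)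
    (horth : ⟪fm, v⟫ + ⟪fp, w⟫ = 0) :
    ⟪initialMomentum Ld fm x y, v⟫ = ⟪finalMomentum Ld fp x y, w⟫ := by
  rw [← inner_gradient_add_inner_gradient hLd] at hsymm
  rw [initialMomentum, finalMomentum, inner_sub_left, inner_neg_left, inner_add_left]
  linarith

theorem stmt_6_general (hLd : Differentiable ℝ Ld)
    {φ : ℝ × E → E} (hφ0 : ∀ x, φ (0, x) = x)
    {ξ : E → E} (hξ : ∀ x, HasDerivAt (fun s => φ (s, x)) (ξ x) 0)
    (hinv : ∀ x y, ∀ᶠ s in 𝓝 (0 : ℝ), Ld (φ (s, x), φ (s, y)) = Ld (x, y))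
    {N : ℕ} {q fm fp : ℕ → E}
    (hDEL : ∀ k, k + 1 < N →
      gradient (fun y => Ld (q k, y)) (q (k + 1))
        + gradient (fun x => Ld (x, q (k + 2))) (q (k + 1)) + fp k + fm (k + 1) = 0)
    (horth : ∀ k < N, ⟪fm k, ξ (q k)⟫ + ⟪fp k, ξ (q (k + 1))⟫ = 0) :
    (∀ k < N, ∀ l < N,
      ⟪initialMomentum Ld (fm k) (q k) (q (k + 1)), ξ (q k)⟫
        = ⟪initialMomentum Ld (fm l) (q l) (q (l + 1)), ξ (q l)⟫)
    ∧ (∀ k < N,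
      ⟪initialMomentum Ld (fm k) (q k) (q (k + 1)), ξ (q k)⟫
        = ⟪finalMomentum Ld (fp k) (q k) (q (k + 1)), ξ (q (k + 1))⟫) := by
  have infinitesimal_invariance (x y : E) : fderiv ℝ Ld (x, y) (ξ x, ξ y) = 0 :=
    fderiv_apply_eq_zero_of_eventuallyEq_const (hLd _) ((hξ x).prodMk (hξ y))
      (by rw [hφ0, hφ0]) (hinv x y)
  have across_step : ∀ k < N,
      ⟪initialMomentum Ld (fm k) (q k) (q (k + 1)), ξ (q k)⟫
        = ⟪finalMomentum Ld (fp k) (q k) (q (k + 1)), ξ (q (k + 1))⟫ := fun k hk =>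
    inner_initialMomentum_eq_inner_finalMomentum (hLd _) (infinitesimal_invariance _ _) (horth k hk)
  have eq_zeroth : ∀ k < N,
      ⟪initialMomentum Ld (fm k) (q k) (q (k + 1)), ξ (q k)⟫
        = ⟪initialMomentum Ld (fm 0) (q 0) (q 1), ξ (q 0)⟫ := by
    intro k hk
    induction k with
    | zero => rfl
    | succ k ih =>
      rw [initialMomentum_eq_finalMomentum_iff.mpr (hDEL k hk),
        ← across_step k (Nat.lt_of_succ_lt hk), ih (Nat.lt_of_succ_lt hk)]
  exact ⟨fun k hk l hl => (eq_zeroth k hk).trans (eq_zeroth l hl).symm, across_step⟩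

end DiscreteMechanics

/-- Forced discrete Noether's theorem: if the discrete forcing is orthogonal to
the group action, the discrete momentum map is preserved along the forced
discrete Euler–Lagrange trajectory. -/
theorem stmt_6 {n : ℕ} (Ld : Evec n × Evec n → ℝ) (hLd : Differentiable ℝ Ld)
    (φ : ℝ × Evec n → Evec n) (hφ : ContDiff ℝ (⊤ : ℕ∞) φ)
    (hφ0 : ∀ x, φ (0, x) = x)
    (hφgrp : ∀ s t : ℝ, ∀ x, φ (s + t, x) = φ (s, φ (t, x)))
    (ξ : Evec n → Evec n) (hξ : ∀ x, ξ x = deriv (fun s => φ (s, x)) 0)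
    (hinv : ∀ (s : ℝ) (x y : Evec n), Ld (φ (s, x), φ (s, y)) = Ld (x, y))
    (N : ℕ)
    (q : ℕ → Evec n) (fm fp : ℕ → Evec n)
    (hDEL : ∀ k, 1 ≤ k → k < N →
      gradient (fun y => Ld (q (k-1), y)) (q k)
        + gradient (fun x => Ld (x, q (k+1))) (q k)
        + fp (k-1) + fm k = 0)
    (horth : ∀ k < N, ⟪fm k, ξ (q k)⟫ + ⟪fp k, ξ (q (k+1))⟫ = 0) :
    (∀ k < N, ∀ l < N,
      ⟪-gradient (fun x => Ld (x, q (k+1))) (q k) - fm k, ξ (q k)⟫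
        = ⟪-gradient (fun x => Ld (x, q (l+1))) (q l) - fm l, ξ (q l)⟫)
    ∧ (∀ k < N,
      ⟪-gradient (fun x => Ld (x, q (k+1))) (q k) - fm k, ξ (q k)⟫
        = ⟪gradient (fun y => Ld (q k, y)) (q (k+1)) + fp k, ξ (q (k+1))⟫) := by
  have hφξ (x : Evec n) : HasDerivAt (fun s => φ (s, x)) (ξ x) 0 := by
    have hφ_diff : Differentiable ℝ φ := hφ.differentiable (by simp)
    rw [hξ, hasDerivAt_deriv_iff]
    fun_prop
  exact stmt_6_general hLd hφ0 hφξ (fun x y => .of_forall fun s => hinv s x y)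
    (fun k hk => hDEL (k + 1) k.succ_pos hk) horth
end
end

section
/- Let h > 0, let L : ℝⁿ × ℝⁿ → ℝ be C², let f_L : ℝⁿ × ℝⁿ × ℝᵐ → ℝⁿ be continuous, and let u : [0,h] → ℝᵐ be continuous. Let V ⊆ ℝⁿ × ℝⁿ be open and let 𝒬 : V × [0,h] → ℝⁿ be C² such that for each (q₀,q₁) ∈ V, the curve t ↦ 𝒬(q₀,q₁,t) solves the forced Euler–Lagrange equations for (L, f_L, u) and satisfies 𝒬(q₀,q₁,0) = q₀ and 𝒬(q₀,q₁,h) = q₁. Define the exact discrete Lagrangian L_d^E(q₀,q₁) = ∫₀ʰ L(𝒬(q₀,q₁,t), 𝒬̇(q₀,q₁,t)) dt and the exact right discrete force f_d^{E−}(q₀,q₁) = ∫₀ʰ (∂𝒬/∂q₀(q₀,q₁,t))ᵀ · f_L(𝒬(q₀,q₁,t), 𝒬̇(q₀,q₁,t), u(t)) dt, where 𝒬̇ denotes ∂𝒬/∂t. Then for all (q₀,q₁) ∈ V: −D₁L_d^E(q₀,q₁) − f_d^{E−}(q₀,q₁) = D₂L(𝒬(q₀,q₁,0), 𝒬̇(q₀,q₁,0)),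 i.e. the exact forced discrete Legendre transform 𝔽^{f−}L_d^E agrees with the continuous Legendre transform 𝔽L evaluated at the initial point of the solution curve. -/
open scoped RealInnerProductSpace

noncomputable section

/-!
The first variation formula: differentiating the action `∫ L(Q, Q̇)` of a family of curves and
integrating by parts leaves the boundary terms `⟪p, δQ⟫`, where `p = D₂L(Q, Q̇)`, and the integral
of `⟪D₁L - ṗ, δQ⟫`. On a forced solution `D₁L - ṗ` is minus the force, so this integral is minus
the discrete force paired with the variation. When only the initial point `q₀` varies, `δQ` is the
identity at time `0` and zero at time `h`, and `-p(0)` is the only boundary term that survives.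
-/

open Filter Function Set Topology MeasureTheory
open ContinuousLinearMap (adjoint adjoint_id adjoint_inner_right)
open scoped Gradient Interval

section ParametricCalculus

variable {H G : Type*} [NormedAddCommGroup H] [NormedSpace ℝ H]
  [NormedAddCommGroup G] [NormedSpace ℝ G]

theorem exists_eventually_forall_norm_le_of_isCompact {X Y F : Type*} [TopologicalSpace X]
    [TopologicalSpace Y] [SeminormedAddCommGroup F] {g : X → Y → F} (hg : Continuous (uncurry g))
    {K : Set Y} (hK : IsCompact K) (x : X) :
    ∃ C, ∀ᶠ x' in 𝓝 x, ∀ y ∈ K, ‖g x' y‖ ≤ C := by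
  obtain ⟨C, hC⟩ := hK.exists_bound_of_continuousOn
    (hg.comp (Continuous.prodMk_right x)).continuousOn
  refine ⟨C + 1, hK.eventually_forall_of_forall_eventually fun y hy => ?_⟩
  have hlt : ‖uncurry g (x, y)‖ < C + 1 := (hC y hy).trans_lt (lt_add_one C)
  exact (hg.norm.continuousAt.eventually_lt_const hlt).mono fun _ hz => hz.le

theorem hasFDerivAt_intervalIntegral_of_contDiff {F : H → ℝ → G}
    (hF : ContDiff ℝ 1 (uncurry F)) (a b : ℝ) (q : H) :
    HasFDerivAt (fun q' => ∫ t in a..b, F q' t) (∫ t in a..b, fderiv ℝ (fun q' => F q' t) q) q := by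
  have hcont (q' : H) : Continuous (F q') := hF.continuous.comp (Continuous.prodMk_right q')
  have hpartial : Continuous (uncurry fun q' t => fderiv ℝ (fun q'' => F q'' t) q') :=
    Continuous.fderiv_one (f := fun (z : H × ℝ) q'' => F q'' z.2)
      (hF.comp (contDiff_snd.prodMk (contDiff_snd.comp contDiff_fst))) continuous_fst
  obtain ⟨C, hC⟩ :=
    exists_eventually_forall_norm_le_of_isCompact hpartial (isCompact_uIcc (a := a) (b := b)) q
  refine intervalIntegral.hasFDerivAt_integral_of_dominated_of_fderiv_le
    (bound := fun _ => C) hC (.of_forall fun q' => (hcont q').aestronglyMeasurable)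
    ((hcont q).intervalIntegrable a b)
    (hpartial.comp (Continuous.prodMk_right q)).aestronglyMeasurable
    (.of_forall fun t ht q' hq' => hq' t (uIoc_subset_uIcc ht)) intervalIntegrable_const
    (.of_forall fun t _ q' _ => ?_)
  exact ((hF.differentiable one_ne_zero).comp
    (differentiable_id.prodMk (differentiable_const t)) q').hasFDerivAt

theorem fderiv_apply_eq_fderiv_uncurry {Y : Type*} [NormedAddCommGroup Y] [NormedSpace ℝ Y]
    {Q : H → Y → G} {q : H} {y : Y} (hQ : DifferentiableAt ℝ (uncurry Q) (q, y)) (w : H) :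
    fderiv ℝ (fun q' => Q q' y) q w = fderiv ℝ (uncurry Q) (q, y) (w, 0) := by
  have h : HasFDerivAt (fun q' => Q q' y) _ q :=
    hQ.hasFDerivAt.comp (f := fun q' => (q', y)) q (hasFDerivAt_prodMk_left q y)
  simp [h.fderiv]

theorem deriv_eq_fderiv_uncurry {Q : H → ℝ → G} {q : H} {t : ℝ}
    (hQ : DifferentiableAt ℝ (uncurry Q) (q, t)) :
    deriv (Q q) t = fderiv ℝ (uncurry Q) (q, t) (0, 1) := by
  have h : HasFDerivAt (Q q) _ t := hQ.hasFDerivAt.comp t (hasFDerivAt_prodMk_right q t)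
  simp [h.hasDerivAt.deriv]

theorem contDiff_uncurry_deriv {Q : H → ℝ → G} (hQ : ContDiff ℝ 2 (uncurry Q)) :
    ContDiff ℝ 1 (uncurry fun q => deriv (Q q)) := by
  have hderiv : (uncurry fun q => deriv (Q q)) = fun z => fderiv ℝ (uncurry Q) z (0, 1) :=
    funext fun z => deriv_eq_fderiv_uncurry (hQ.differentiable two_ne_zero z)
  rw [hderiv]
  exact (hQ.fderiv_right le_rfl).clm_apply contDiff_const

theorem hasDerivAt_fderiv_apply_comm {Q : H → ℝ → G} (hQ : ContDiff ℝ 2 (uncurry Q))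
    (q w : H) (t : ℝ) :
    HasDerivAt (fun τ => fderiv ℝ (fun q' => Q q' τ) q w)
      (fderiv ℝ (fun q' => deriv (Q q') t) q w) t := by
  have hdiff : Differentiable ℝ (uncurry Q) := hQ.differentiable two_ne_zero
  have hdiff' : Differentiable ℝ (fderiv ℝ (uncurry Q)) :=
    (hQ.fderiv_right (m := 1) le_rfl).differentiable one_ne_zero
  have hsymm : IsSymmSndFDerivAt ℝ (uncurry Q) (q, t) :=
    hQ.contDiffAt.isSymmSndFDerivAt (by simp)
  have htime : HasFDerivAt (fun τ => fderiv ℝ (uncurry Q) (q, τ)) _ t :=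
    (hdiff' (q, t)).hasFDerivAt.comp t (hasFDerivAt_prodMk_right q t)
  have hspace : HasFDerivAt (fun q' => fderiv ℝ (uncurry Q) (q', t)) _ q :=
    (hdiff' (q, t)).hasFDerivAt.comp q (hasFDerivAt_prodMk_left q t)
  simp only [fderiv_apply_eq_fderiv_uncurry (hdiff _), deriv_eq_fderiv_uncurry (hdiff _)]
  convert htime.hasDerivAt.clm_apply (hasDerivAt_const t (w, (0 : ℝ))) using 1
  rw [(hspace.clm_apply (hasFDerivAt_const (0, 1) q)).fderiv]
  simpa using hsymm.eq (w, 0) (0, 1)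

end ParametricCalculus

section Gradient

variable {E F X : Type*} [NormedAddCommGroup E] [InnerProductSpace ℝ E] [CompleteSpace E]
  [NormedAddCommGroup F] [InnerProductSpace ℝ F] [CompleteSpace F]
  [NormedAddCommGroup X] [NormedSpace ℝ X]

theorem contDiff_gradient_comp {k l : WithTop ℕ∞} {φ : X → E → ℝ} {g : X → E}
    (hφ : ContDiff ℝ l (uncurry φ)) (hg : ContDiff ℝ k g) (hkl : k + 1 ≤ l) :
    ContDiff ℝ k fun x => ∇ (φ x) (g x) :=
  (InnerProductSpace.toDual ℝ E).symm.toContinuousLinearEquiv.contDiff.comp (hφ.fderiv hg hkl)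

theorem fderiv_prod_apply_eq_inner_gradient_add {L : E × F → ℝ} {y : E} {v : F}
    (hL : DifferentiableAt ℝ L (y, v)) (w : E) (z : F) :
    fderiv ℝ L (y, v) (w, z) = ⟪∇ (fun y' => L (y', v)) y, w⟫ + ⟪∇ (fun v' => L (y, v')) v, z⟫ := by
  have hfst : HasFDerivAt (fun y' => L (y', v)) _ y :=
    hL.hasFDerivAt.comp y (hasFDerivAt_prodMk_left y v)
  have hsnd : HasFDerivAt (fun v' => L (y, v')) _ v :=
    hL.hasFDerivAt.comp v (hasFDerivAt_prodMk_right y v)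
  rw [inner_gradient_left, inner_gradient_left, hfst.fderiv, hsnd.fderiv]
  simp [← map_add]

end Gradient

section FirstVariation

variable {E H : Type*} [NormedAddCommGroup E] [InnerProductSpace ℝ E]

/-- The action `∫ₐᵇ L(γ, γ̇) dt` of the curve `γ`; for the curve solving a boundary value problem
this is the exact discrete Lagrangian. -/
def action (L : E × E → ℝ) (a b : ℝ) (γ : ℝ → E) : ℝ :=
  ∫ t in a..b, L (γ t, deriv γ t)

/-- The conjugate momentum `D₂L(γ, γ̇)`, i.e. the continuous Legendre transform `𝔽L` along the
curve `γ`, as a vector by way of the inner product. -/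
def momentum [CompleteSpace E] (L : E × E → ℝ) (γ : ℝ → E) (t : ℝ) : E :=
  ∇ (fun v => L (γ t, v)) (deriv γ t)

/-- The Euler–Lagrange expression `D₁L(γ, γ̇) - d/dt D₂L(γ, γ̇)`; the curve `γ` is a solution under
a force `f` when it equals `-f`. -/
def eulerLagrange [CompleteSpace E] (L : E × E → ℝ) (γ : ℝ → E) (t : ℝ) : E :=
  ∇ (fun y => L (y, deriv γ t)) (γ t) - deriv (momentum L γ) t

/-- The derivative `∂Q/∂q` at time `t` of a family `Q` of curves with respect to its parameter. -/
def variation [NormedAddCommGroup H] [NormedSpace ℝ H] (Q : H → ℝ → E) (q : H) (t : ℝ) :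
    H →L[ℝ] E :=
  fderiv ℝ (fun q' => Q q' t) q

variable {L : E × E → ℝ} {a b : ℝ} {γ : ℝ → E} {Q : H → ℝ → E}

section Curve

variable [CompleteSpace E]

theorem contDiff_momentum (hL : ContDiff ℝ 2 L) (hγ : ContDiff ℝ 2 γ) :
    ContDiff ℝ 1 (momentum L γ) :=
  contDiff_gradient_comp (φ := fun t v => L (γ t, v))
    (hL.comp ((hγ.comp contDiff_fst).prodMk contDiff_snd)) hγ.deriv' le_rfl

theorem continuous_eulerLagrange (hL : ContDiff ℝ 2 L) (hγ : ContDiff ℝ 2 γ) :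
    Continuous (eulerLagrange L γ) := by
  have hvelocity : ContDiff ℝ 1 (deriv γ) := hγ.deriv'
  have hposition : ContDiff ℝ 0 fun t => ∇ (fun y => L (y, deriv γ t)) (γ t) :=
    contDiff_gradient_comp (φ := fun t y => L (y, deriv γ t)) (l := 1)
      ((hL.of_le one_le_two).comp (contDiff_snd.prodMk (hvelocity.comp contDiff_fst)))
      (hγ.of_le zero_le_two) le_rfl
  exact hposition.continuous.sub (contDiff_momentum hL hγ).continuous_deriv_one

end Curve

section Family

variable [NormedAddCommGroup H] [NormedSpace ℝ H]

theorem contDiff_variation (hQ : ContDiff ℝ 2 (uncurry Q)) (q : H) :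
    ContDiff ℝ 1 (variation Q q) :=
  ContDiff.fderiv (f := fun t q' => Q q' t) (hQ.comp (contDiff_snd.prodMk contDiff_fst))
    contDiff_const le_rfl

theorem variation_eq_of_eventuallyEq {f : H → E} {f' : H →L[ℝ] E} {q : H} {t : ℝ}
    (h : (fun q' => Q q' t) =ᶠ[𝓝 q] f) (hf : HasFDerivAt f f' q) : variation Q q t = f' :=
  (hf.congr_of_eventuallyEq h).fderiv

theorem contDiff_lagrangian_comp (hL : ContDiff ℝ 1 L) (hQ : ContDiff ℝ 2 (uncurry Q)) :
    ContDiff ℝ 1 (uncurry fun q t => L (Q q t, deriv (Q q) t)) :=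
  hL.comp ((hQ.of_le one_le_two).prodMk (contDiff_uncurry_deriv hQ))

theorem hasFDerivAt_action (hL : ContDiff ℝ 1 L) (hQ : ContDiff ℝ 2 (uncurry Q)) (q : H) :
    HasFDerivAt (fun q' => action L a b (Q q'))
      (∫ t in a..b, fderiv ℝ (fun q' => L (Q q' t, deriv (Q q') t)) q) q :=
  hasFDerivAt_intervalIntegral_of_contDiff (contDiff_lagrangian_comp hL hQ) a b q

variable [CompleteSpace E]

-- Equality of mixed partials is what lets the variation of the velocity appear as `d/dt δQ`.
theorem fderiv_lagrangian_comp_apply (hL : ContDiff ℝ 2 L) (hQ : ContDiff ℝ 2 (uncurry Q))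
    (q w : H) (t : ℝ) :
    fderiv ℝ (fun q' => L (Q q' t, deriv (Q q') t)) q w =
      deriv (fun τ => ⟪momentum L (Q q) τ, variation Q q τ w⟫) t +
        ⟪eulerLagrange L (Q q) t, variation Q q t w⟫ := by
  have hslice : ContDiff ℝ 2 fun q' : H => (q', t) := contDiff_prodMk_left t
  have hposition : DifferentiableAt ℝ (fun q' => Q q' t) q :=
    (hQ.comp hslice).differentiable two_ne_zero q
  have hvelocity : DifferentiableAt ℝ (fun q' => deriv (Q q') t) q :=
    ((contDiff_uncurry_deriv hQ).comp (hslice.of_le one_le_two)).differentiable one_ne_zero q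
  have hLdiff : DifferentiableAt ℝ L (Q q t, deriv (Q q) t) := hL.differentiable two_ne_zero _
  have hchain : HasFDerivAt (fun q' => L (Q q' t, deriv (Q q') t)) _ q :=
    hLdiff.hasFDerivAt.comp q (hposition.hasFDerivAt.prodMk hvelocity.hasFDerivAt)
  have hmomentum : HasDerivAt (momentum L (Q q)) (deriv (momentum L (Q q)) t) t :=
    ((contDiff_momentum hL (hQ.comp (contDiff_prodMk_right q))).differentiable
      one_ne_zero t).hasDerivAt
  have hproduct : HasDerivAt (fun τ => ⟪momentum L (Q q) τ, variation Q q τ w⟫) _ t :=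
    hmomentum.inner ℝ (hasDerivAt_fderiv_apply_comm hQ q w t)
  rw [hproduct.deriv, hchain.fderiv, ContinuousLinearMap.comp_apply,
    ContinuousLinearMap.prod_apply, fderiv_prod_apply_eq_inner_gradient_add hLdiff,
    eulerLagrange, inner_sub_left]
  simp only [momentum, variation]
  ring

theorem fderiv_action_apply (hL : ContDiff ℝ 2 L) (hQ : ContDiff ℝ 2 (uncurry Q)) (q w : H) :
    fderiv ℝ (fun q' => action L a b (Q q')) q w =
      ⟪momentum L (Q q) b, variation Q q b w⟫ - ⟪momentum L (Q q) a, variation Q q a w⟫ +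
        ∫ t in a..b, ⟪eulerLagrange L (Q q) t, variation Q q t w⟫ := by
  have hcurve : ContDiff ℝ 2 (Q q) := hQ.comp (contDiff_prodMk_right q)
  have hvariation : ContDiff ℝ 1 fun t => variation Q q t w :=
    (contDiff_variation hQ q).clm_apply contDiff_const
  have hpairing : ContDiff ℝ 1 fun t => ⟪momentum L (Q q) t, variation Q q t w⟫ :=
    (contDiff_momentum hL hcurve).inner ℝ hvariation
  have hEL : Continuous fun t => ⟪eulerLagrange L (Q q) t, variation Q q t w⟫ :=
    (continuous_eulerLagrange hL hcurve).inner hvariation.continuous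
  have hintegrand : Continuous fun t => fderiv ℝ (fun q' => L (Q q' t, deriv (Q q') t)) q :=
    Continuous.fderiv_one (f := fun t q' => L (Q q' t, deriv (Q q') t))
      ((contDiff_lagrangian_comp (hL.of_le one_le_two) hQ).comp
        (contDiff_snd.prodMk contDiff_fst)) continuous_const
  rw [(hasFDerivAt_action (hL.of_le one_le_two) hQ q).fderiv,
    ContinuousLinearMap.intervalIntegral_apply (hintegrand.intervalIntegrable a b)]
  simp only [fderiv_lagrangian_comp_apply hL hQ]
  rw [intervalIntegral.integral_add (hpairing.continuous_deriv_one.intervalIntegrable a b)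
      (hEL.intervalIntegrable a b),
    intervalIntegral.integral_deriv_eq_sub (fun t _ => hpairing.differentiable one_ne_zero t)
      (hpairing.continuous_deriv_one.intervalIntegrable a b)]

end Family

section Gradient

variable [CompleteSpace E] [NormedAddCommGroup H] [InnerProductSpace ℝ H] [CompleteSpace H]

theorem gradient_action (hL : ContDiff ℝ 2 L) (hQ : ContDiff ℝ 2 (uncurry Q)) (q : H) :
    ∇ (fun q' => action L a b (Q q')) q =
      adjoint (variation Q q b) (momentum L (Q q) b) -
        adjoint (variation Q q a) (momentum L (Q q) a) +
        ∫ t in a..b, adjoint (variation Q q t) (eulerLagrange L (Q q) t) := by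
  have hadjoint : Continuous fun t => adjoint (variation Q q t) (eulerLagrange L (Q q) t) :=
    (adjoint.continuous.comp (contDiff_variation hQ q).continuous).clm_apply
      (continuous_eulerLagrange hL (hQ.comp (contDiff_prodMk_right q)))
  refine ext_inner_left ℝ fun w => ?_
  have hintegral := (innerSL ℝ w).intervalIntegral_comp_comm
    (hadjoint.intervalIntegrable (μ := volume) a b)
  simp only [innerSL_apply_apply, adjoint_inner_right] at hintegral
  rw [real_inner_comm, inner_gradient_left, fderiv_action_apply hL hQ, inner_add_right,
    inner_sub_right, ← hintegral]
  simp only [adjoint_inner_right, real_inner_comm]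

theorem gradient_action_of_eulerLagrange_add_eq_zero (hL : ContDiff ℝ 2 L)
    (hQ : ContDiff ℝ 2 (uncurry Q)) {q : H} {f : ℝ → E}
    (hEL : ∀ t ∈ [[a, b]], eulerLagrange L (Q q) t + f t = 0) :
    ∇ (fun q' => action L a b (Q q')) q =
      adjoint (variation Q q b) (momentum L (Q q) b) -
        adjoint (variation Q q a) (momentum L (Q q) a) -
        ∫ t in a..b, adjoint (variation Q q t) (f t) := by
  have hforce : ∫ t in a..b, adjoint (variation Q q t) (eulerLagrange L (Q q) t) =
      ∫ t in a..b, -adjoint (variation Q q t) (f t) :=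
    intervalIntegral.integral_congr fun t ht => by
      simp only [eq_neg_of_add_eq_zero_left (hEL t ht), map_neg]
  rw [gradient_action hL hQ, hforce, intervalIntegral.integral_neg, ← sub_eq_add_neg]

end Gradient

end FirstVariation

theorem stmt_7_general {E U : Type*} [NormedAddCommGroup E] [InnerProductSpace ℝ E]
    [CompleteSpace E] {h : ℝ} {L : E × E → ℝ} (hL : ContDiff ℝ 2 L)
    {fL : E × E × U → E} {u : ℝ → U} {V : Set (E × E)} (hV : IsOpen V)
    {Q : E × E → ℝ → E} (hQ : ContDiff ℝ 2 (uncurry Q))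
    (hQ_zero : ∀ x ∈ V, Q x 0 = x.1) (hQ_h : ∀ x ∈ V, Q x h = x.2) {x : E × E} (hx : x ∈ V)
    (hEL : ∀ t ∈ [[0, h]], eulerLagrange L (Q x) t + fL (Q x t, deriv (Q x) t, u t) = 0) :
    -∇ (fun q₀ => action L 0 h (Q (q₀, x.2))) x.1 -
        ∫ t in (0 : ℝ)..h, adjoint (variation (fun q₀ => Q (q₀, x.2)) x.1 t)
          (fL (Q x t, deriv (Q x) t, u t)) =
      momentum L (Q x) 0 := by
  have hslice : ContDiff ℝ 2 (uncurry fun q₀ => Q (q₀, x.2)) :=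
    hQ.comp ((contDiff_fst.prodMk contDiff_const).prodMk contDiff_snd)
  have hnear : ∀ᶠ q₀ in 𝓝 x.1, (q₀, x.2) ∈ V :=
    (Continuous.prodMk_left x.2).continuousAt.eventually (hV.mem_nhds hx)
  have hvar_zero : variation (fun q₀ => Q (q₀, x.2)) x.1 0 = .id ℝ E :=
    variation_eq_of_eventuallyEq (hnear.mono fun _ => hQ_zero _) (hasFDerivAt_id x.1)
  have hvar_h : variation (fun q₀ => Q (q₀, x.2)) x.1 h = 0 :=
    variation_eq_of_eventuallyEq (hnear.mono fun _ => hQ_h _) (hasFDerivAt_const x.2 x.1)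
  rw [gradient_action_of_eulerLagrange_add_eq_zero hL hslice hEL, hvar_zero, hvar_h, adjoint_id]
  simp

/-- The exact forced discrete Legendre transform `𝔽^{f−}L_d^E` agrees with the
continuous Legendre transform `𝔽L` at the initial point of the solution
curve. -/
theorem stmt_7 {n m : ℕ} (h : ℝ) (hh : 0 < h)
    (L : Evec n × Evec n → ℝ) (hL : ContDiff ℝ 2 L)
    (fL : Evec n × Evec n × Evec m → Evec n) (hfL : Continuous fL)
    (u : ℝ → Evec m) (hu : Continuous u)
    (V : Set (Evec n × Evec n)) (hV : IsOpen V)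
    (Qf : (Evec n × Evec n) × ℝ → Evec n) (hQf : ContDiff ℝ 2 Qf)
    (hbd0 : ∀ x ∈ V, Qf (x, 0) = x.1)
    (hbdh : ∀ x ∈ V, Qf (x, h) = x.2)
    (hEL : ∀ x ∈ V, ∀ t ∈ Set.Icc (0:ℝ) h,
      gradient (fun y => L (y, deriv (fun τ => Qf (x, τ)) t)) (Qf (x, t))
        - deriv (fun σ => gradient (fun v => L (Qf (x, σ), v))
            (deriv (fun τ => Qf (x, τ)) σ)) t
        + fL (Qf (x, t), deriv (fun τ => Qf (x, τ)) t, u t) = 0)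
    (LdE : Evec n × Evec n → ℝ)
    (hLdE : ∀ x, LdE x = ∫ t in (0:ℝ)..h, L (Qf (x, t), deriv (fun τ => Qf (x, τ)) t))
    (fdEm : Evec n × Evec n → Evec n)
    (hfdEm : ∀ x : Evec n × Evec n, fdEm x = ∫ t in (0:ℝ)..h,
      (ContinuousLinearMap.adjoint (fderiv ℝ (fun a => Qf ((a, x.2), t)) x.1))
        (fL (Qf (x, t), deriv (fun τ => Qf (x, τ)) t, u t))) :
    ∀ x ∈ V,
      -gradient (fun a => LdE (a, x.2)) x.1 - fdEm x
        = gradient (fun v => L (Qf (x, 0), v)) (deriv (fun τ => Qf (x, τ)) 0) := by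
  intro x hx
  simp only [hLdE, hfdEm]
  exact stmt_7_general (Q := fun x t => Qf (x, t)) hL hV hQf hbd0 hbdh hx
    (uIcc_of_le hh.le ▸ hEL x hx)
end
end

section
/- (Karush–Kuhn–Tucker conditions.) Let φ : ℝⁿ → ℝ, a : ℝⁿ → ℝᵐ, b : ℝⁿ → ℝᵖ be continuously differentiable, and let ξ* ∈ ℝⁿ be a local minimum of φ on the feasible set {ξ : a(ξ) = 0, b(ξ) ≥ 0}. Suppose ξ* is a regular point: the gradients ∇a_i(ξ*) for i = 1, …, m, together with the gradients ∇b_j(ξ*) for those j with b_j(ξ*) = 0 (the active inequality constraints), are linearly independent. Then there exist unique Lagrange multiplier vectors λ* ∈ ℝᵐ and μ* ∈ ℝᵖ such that ∇φ(ξ*) − Σ_{i=1}^{m} λ*_i ∇a_i(ξ*) − Σ_{j=1}^{p} μ*_j ∇b_j(ξ*) = 0, a(ξ*) = 0, b(ξ*) ≥ 0, μ* ≥ 0, and μ*_j b_j(ξ*) = 0 for j = 1, …, p. -/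
open scoped RealInnerProductSpace

noncomputable section

/-!
Regularity makes every direction `v` with `a'ᵢ v = 0`, and `0 ≤ b'ⱼ v` for active `j`, tangent to
the feasible set: the implicit function theorem bends the line `ξ + t v` into a curve along which
the equality and active constraints are exactly affine in `t`. Hence `0 ≤ φ' v` for all these `v`.
For linearly independent functionals Farkas' lemma is elementary: `φ'` vanishes on their common
kernel, so it lies in their span, and evaluating at a dual vector reads off the sign of each
coefficient. Complementary slackness kills the inactive multipliers, so uniqueness is again linear
independence.
-/

open Filter Set
open scoped Topology

section LinearAlgebra

theorem pi_surjective_of_linearIndependent {K V W ι : Type*} [Field K] [AddCommGroup V]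
    [Module K V] [AddCommGroup W] [Module K W] [Finite ι] {B : W →ₗ[K] V →ₗ[K] K}
    (hB : B.SeparatingLeft) {u : ι → W} (hu : LinearIndependent K u) :
    Function.Surjective (LinearMap.pi fun i ↦ B (u i)) := by
  have hcoe : LinearIndependent K fun i ↦ ⇑(B (u i)) :=
    (hu.map' B (LinearMap.separatingLeft_iff_ker_eq_bot.1 hB)).map' (LinearMap.ltoFun K V K K)
      (LinearMap.ker_eq_bot.2 DFunLike.coe_injective)
  rw [← LinearMap.range_eq_top, ← span_flip_eq_top_iff_linearIndependent.2 hcoe]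
  exact (Submodule.span_eq (LinearMap.pi fun i ↦ B (u i)).range).symm

theorem exists_nonneg_eq_sum_smul_add_sum_smul {K V W ι κ : Type*} [Field K] [LinearOrder K]
    [IsStrictOrderedRing K] [AddCommGroup V] [Module K V] [AddCommGroup W] [Module K W]
    [Fintype ι] [Fintype κ] {B : W →ₗ[K] V →ₗ[K] K} (hB : B.SeparatingLeft)
    {f : W} {u : ι → W} {w : κ → W} (huw : LinearIndependent K (Sum.elim u w))
    (hf : ∀ v, (∀ i, B (u i) v = 0) → (∀ j, 0 ≤ B (w j) v) → 0 ≤ B f v) :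
    ∃ (c : ι → K) (d : κ → K), (∀ j, 0 ≤ d j) ∧ f = ∑ i, c i • u i + ∑ j, d j • w j := by
  classical
  have hker : ⨅ k, (B (Sum.elim u w k)).ker ≤ (B f).ker := by
    intro v hv
    simp only [Submodule.mem_iInf, LinearMap.mem_ker, Sum.forall, Sum.elim_inl,
      Sum.elim_inr] at hv
    have hneg : 0 ≤ B f (-v) := hf (-v) (by simp [hv.1]) (by simp [hv.2])
    exact le_antisymm (by simpa using hneg) (hf v hv.1 fun j ↦ (hv.2 j).ge)
  obtain ⟨e, he⟩ :=
    (Submodule.mem_span_range_iff_exists_fun K).1 (mem_span_of_iInf_ker_le_ker hker)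
  have hfe : f = ∑ k, e k • Sum.elim u w k :=
    LinearMap.ker_eq_bot.1 (LinearMap.separatingLeft_iff_ker_eq_bot.1 hB) (by simp [← he])
  refine ⟨e ∘ Sum.inl, e ∘ Sum.inr, fun j ↦ ?_, by simpa using hfe⟩
  obtain ⟨v, hv⟩ := pi_surjective_of_linearIndependent hB huw (Pi.single (Sum.inr j) 1)
  replace hv (k : ι ⊕ κ) : B (Sum.elim u w k) v = if k = Sum.inr j then 1 else 0 :=
    (congrFun hv k).trans (Pi.single_apply _ _ _)
  have hfv : B f v = e (Sum.inr j) := by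
    simp only [← he, LinearMap.sum_apply, LinearMap.smul_apply, hv, smul_eq_mul, mul_ite, mul_one,
      mul_zero, Finset.sum_ite_eq', Finset.mem_univ, if_true]
  rw [Function.comp_apply, ← hfv]
  refine hf v (fun i ↦ by simpa using hv (Sum.inl i)) fun j' ↦ ?_
  rw [show B (w j') v = _ from hv (Sum.inr j')]
  split_ifs <;> simp

variable {R V ι κ : Type*} [Semiring R] [AddCommMonoid V] [Module R V] [Fintype ι] [Fintype κ]
  {p : κ → Prop}

theorem sum_subtype_smul_of_eq_zero_of_not [DecidablePred p] {d : κ → R}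
    (hd : ∀ j, ¬p j → d j = 0) (w : κ → V) :
    ∑ j : {j // p j}, d j • w j = ∑ j, d j • w j :=
  Fintype.sum_of_injective _ Subtype.val_injective _ _
    (fun j hj ↦ by rw [hd j (by simpa using hj), zero_smul]) fun _ ↦ rfl

theorem eq_and_eq_of_sum_smul_add_sum_smul_eq {u : ι → V} {w : κ → V}
    (huw : LinearIndependent R (Sum.elim u fun j : {j // p j} ↦ w j)) {c c' : ι → R} {d d' : κ → R}
    (hd : ∀ j, ¬p j → d j = 0) (hd' : ∀ j, ¬p j → d' j = 0)
    (h : ∑ i, c i • u i + ∑ j, d j • w j = ∑ i, c' i • u i + ∑ j, d' j • w j) :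
    c = c' ∧ d = d' := by
  classical
  have hcoeff : Sum.elim c (fun j : {j // p j} ↦ d j) = Sum.elim c' fun j : {j // p j} ↦ d' j := by
    apply huw.fintypeLinearCombination_injective
    simpa [Fintype.linearCombination_apply, sum_subtype_smul_of_eq_zero_of_not hd,
      sum_subtype_smul_of_eq_zero_of_not hd'] using h
  refine ⟨funext fun i ↦ congrFun hcoeff (Sum.inl i), funext fun j ↦ ?_⟩
  by_cases hj : p j
  · exact congrFun hcoeff (Sum.inr ⟨j, hj⟩)
  · rw [hd j hj, hd' j hj]

end LinearAlgebra

section TangentCone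

variable {E F : Type*} [NormedAddCommGroup E] [NormedSpace ℝ E] [NormedAddCommGroup F]
  [NormedSpace ℝ F]

theorem mem_posTangentConeAt_of_hasDerivWithinAt {s : Set E} {x : ℝ → E} {v : E}
    (hx : HasDerivWithinAt x v (Ioi 0) 0) (hs : ∀ᶠ t in 𝓝[>] 0, x t ∈ s) :
    v ∈ posTangentConeAt s (x 0) := by
  refine mem_tangentConeAt_of_seq (𝓝[>] (0 : ℝ)) (fun t ↦ t⁻¹.toNNReal) (fun t ↦ x t - x 0)
    (tendsto_sub_nhds_zero_iff.2 hx.continuousWithinAt) (by simpa using hs) ?_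
  refine ((hasDerivWithinAt_iff_tendsto_slope' self_notMem_Ioi).1 hx).congr' ?_
  filter_upwards [self_mem_nhdsWithin] with t ht
  rw [slope_def_module, sub_zero, NNReal.smul_def, Real.coe_toNNReal _ (inv_nonneg.2 ht.le)]

-- The line `ξ + t • v` is corrected by `R (ψ t)`, where `R` is a right inverse of the derivative
-- and `ψ t = o(t)` solves the implicit equation `Φ (t, ψ t) = f ξ`.
theorem exists_hasDerivAt_and_eventually_apply_eq_add_smul [CompleteSpace F] {f : E → F}
    {f' : E →L[ℝ] F} {ξ : E} (hf : HasStrictFDerivAt f f' ξ) (hf' : f'.HasRightInverse) (v : E) :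
    ∃ x : ℝ → E, x 0 = ξ ∧ HasDerivAt x v 0 ∧ ∀ᶠ t in 𝓝 0, f (x t) = f ξ + t • f' v := by
  obtain ⟨R, hR⟩ := hf'
  let Φ : ℝ × F → F := fun p ↦ f (ξ + (p.1 • v + R p.2)) - p.1 • f' v
  have hΦ : HasStrictFDerivAt Φ (.snd ℝ ℝ F) (0, 0) := by
    have hline : HasStrictFDerivAt (fun p : ℝ × F ↦ ξ + (p.1 • v + R p.2))
        ((ContinuousLinearMap.fst ℝ ℝ F).smulRight v + R ∘L .snd ℝ ℝ F) (0, 0) :=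
      ((hasStrictFDerivAt_fst.smul_const v).add (R.hasStrictFDerivAt.comp _
        hasStrictFDerivAt_snd)).const_add ξ
    have hf0 : HasStrictFDerivAt f f' (ξ + ((0 : ℝ) • v + R 0)) := by simpa using hf
    refine ((hf0.comp (0, 0) hline).sub (hasStrictFDerivAt_fst.smul_const (f' v))).congr_fderiv ?_
    ext <;> simp [hR _]
  have hinv : (ContinuousLinearMap.snd ℝ ℝ F ∘L .inr ℝ ℝ F).IsInvertible :=
    ⟨.refl ℝ F, rfl⟩
  let ψ : ℝ → F := hΦ.implicitFunctionOfProdDomain hinv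
  have hψ0 : ψ 0 = 0 :=
    (hΦ.eventually_apply_eq_iff_implicitFunctionOfProdDomain hinv).self_of_nhds.1 rfl
  have hψ : HasDerivAt ψ 0 0 := by
    simpa using (hΦ.hasStrictFDerivAt_implicitFunctionOfProdDomain hinv).hasFDerivAt.hasDerivAt
  refine ⟨fun t ↦ ξ + (t • v + R (ψ t)), by simp [hψ0], ?_, ?_⟩
  · simpa using (((hasDerivAt_id (0 : ℝ)).smul_const v).add
      (R.hasFDerivAt.comp_hasDerivAt 0 hψ)).const_add ξ
  · filter_upwards [hΦ.eventually_apply_implicitFunctionOfProdDomain hinv] with t ht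
    simpa [Φ, sub_eq_iff_eq_add] using ht

end TangentCone

section Multipliers

/-- The feasible set of the nonlinear program with equality constraints `a i x = 0` and inequality
constraints `0 ≤ b j x`. -/
def feasibleSet {X ι κ : Type*} (a : ι → X → ℝ) (b : κ → X → ℝ) : Set X :=
  {x | (∀ i, a i x = 0) ∧ ∀ j, 0 ≤ b j x}

theorem topDualPairing_separatingLeft (𝕜 E : Type*) [NontriviallyNormedField 𝕜]
    [NormedAddCommGroup E] [NormedSpace 𝕜 E] : (topDualPairing 𝕜 E).SeparatingLeft :=
  fun _ h ↦ ContinuousLinearMap.ext h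

variable {E ι κ : Type*} [NormedAddCommGroup E] [NormedSpace ℝ E] {φ : E → ℝ}
  {a : ι → E → ℝ} {b : κ → E → ℝ} {φ' : StrongDual ℝ E} {a' : ι → StrongDual ℝ E}
  {b' : κ → StrongDual ℝ E} {ξ : E}

theorem hasRightInverse_pi_of_linearIndependent [Finite ι] (h : LinearIndependent ℝ a') :
    (ContinuousLinearMap.pi a').HasRightInverse :=
  .of_surjective_of_finiteDimensional <|
    pi_surjective_of_linearIndependent (topDualPairing_separatingLeft ℝ E) h

theorem mem_posTangentConeAt_feasibleSet [Finite ι] [Finite κ]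
    (ha : ∀ i, HasStrictFDerivAt (a i) (a' i) ξ) (hb : ∀ j, HasStrictFDerivAt (b j) (b' j) ξ)
    (hξ : ξ ∈ feasibleSet a b)
    (hreg : LinearIndependent ℝ (Sum.elim a' fun j : {j // b j ξ = 0} ↦ b' j)) {v : E}
    (hav : ∀ i, a' i v = 0) (hbv : ∀ j, b j ξ = 0 → 0 ≤ b' j v) :
    v ∈ posTangentConeAt (feasibleSet a b) ξ := by
  cases nonempty_fintype ι
  cases nonempty_fintype κ
  let g : E → ι ⊕ {j // b j ξ = 0} → ℝ := fun x ↦ Sum.elim (a · x) fun j ↦ b j x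
  have hg : HasStrictFDerivAt g (.pi (Sum.elim a' fun j : {j // b j ξ = 0} ↦ b' j)) ξ :=
    hasStrictFDerivAt_pi.2 <| Sum.forall.2 ⟨ha, fun j ↦ hb j⟩
  obtain ⟨x, rfl, hx, hgx⟩ := exists_hasDerivAt_and_eventually_apply_eq_add_smul hg
    (hasRightInverse_pi_of_linearIndependent hreg) v
  have hinactive : ∀ᶠ t in 𝓝 0, ∀ j, b j (x 0) ≠ 0 → 0 < b j (x t) := by
    refine eventually_all.2 fun j ↦ eventually_imp_distrib_left.2 fun hj ↦ ?_
    exact ((hb j).continuousAt.comp hx.continuousAt).eventually_const_lt ((hξ.2 j).lt_of_ne' hj)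
  refine mem_posTangentConeAt_of_hasDerivWithinAt hx.hasDerivWithinAt ?_
  filter_upwards [nhdsWithin_le_nhds hgx, nhdsWithin_le_nhds hinactive, self_mem_nhdsWithin]
    with t hgt hpos (ht : 0 < t)
  refine ⟨fun i ↦ ?_, fun j ↦ ?_⟩
  · simpa [g, hξ.1 i, hav i] using congrFun hgt (Sum.inl i)
  · by_cases hj : b j (x 0) = 0
    · have hbt : b j (x t) = t * b' j v := by simpa [g, hj] using congrFun hgt (Sum.inr ⟨j, hj⟩)
      exact hbt ▸ mul_nonneg ht.le (hbv j hj)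
    · exact (hpos j hj).le

variable [Fintype ι] [Fintype κ]

theorem exists_kkt_multipliers (hφ : HasFDerivAt φ φ' ξ)
    (ha : ∀ i, HasStrictFDerivAt (a i) (a' i) ξ) (hb : ∀ j, HasStrictFDerivAt (b j) (b' j) ξ)
    (hξ : ξ ∈ feasibleSet a b) (hmin : IsLocalMinOn φ (feasibleSet a b) ξ)
    (hreg : LinearIndependent ℝ (Sum.elim a' fun j : {j // b j ξ = 0} ↦ b' j)) :
    ∃ (l : ι → ℝ) (μ : κ → ℝ), φ' = ∑ i, l i • a' i + ∑ j, μ j • b' j ∧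
      (∀ j, 0 ≤ μ j) ∧ ∀ j, μ j * b j ξ = 0 := by
  have hφ_nonneg (v : E) (hav : ∀ i, a' i v = 0) (hbv : ∀ j : {j // b j ξ = 0}, 0 ≤ b' j v) :
      0 ≤ φ' v :=
    hmin.hasFDerivWithinAt_nonneg hφ.hasFDerivWithinAt <|
      mem_posTangentConeAt_feasibleSet ha hb hξ hreg hav fun j hj ↦ hbv ⟨j, hj⟩
  obtain ⟨l, d, hd, hφ'⟩ := exists_nonneg_eq_sum_smul_add_sum_smul
    (topDualPairing_separatingLeft ℝ E) hreg hφ_nonneg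
  let μ : κ → ℝ := fun j ↦ if hj : b j ξ = 0 then d ⟨j, hj⟩ else 0
  have hμ_active (j : {j // b j ξ = 0}) : μ j = d j := dif_pos j.2
  have hμ_inactive (j : κ) (hj : b j ξ ≠ 0) : μ j = 0 := dif_neg hj
  refine ⟨l, μ, ?_, fun j ↦ ?_, fun j ↦ ?_⟩
  · rw [hφ', ← sum_subtype_smul_of_eq_zero_of_not hμ_inactive]
    simp only [hμ_active]
  · by_cases hj : b j ξ = 0
    · exact (hd _).trans_eq (hμ_active ⟨j, hj⟩).symm
    · exact (hμ_inactive j hj).ge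
  · by_cases hj : b j ξ = 0 <;> simp [hj, hμ_inactive]

theorem stmt_10_general (hφ : HasFDerivAt φ φ' ξ)
    (ha : ∀ i, HasStrictFDerivAt (a i) (a' i) ξ) (hb : ∀ j, HasStrictFDerivAt (b j) (b' j) ξ)
    (hξ : ξ ∈ feasibleSet a b) (hmin : IsLocalMinOn φ (feasibleSet a b) ξ)
    (hreg : LinearIndependent ℝ (Sum.elim a' fun j : {j // b j ξ = 0} ↦ b' j)) :
    ∃! lm : (ι → ℝ) × (κ → ℝ), φ' = ∑ i, lm.1 i • a' i + ∑ j, lm.2 j • b' j ∧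
      (∀ j, 0 ≤ lm.2 j) ∧ ∀ j, lm.2 j * b j ξ = 0 := by
  obtain ⟨l, μ, hφ', hμ, hslack⟩ := exists_kkt_multipliers hφ ha hb hξ hmin hreg
  refine ⟨(l, μ), ⟨hφ', hμ, hslack⟩, fun ⟨l₁, μ₁⟩ ⟨hφ'₁, _, hslack₁⟩ ↦ Prod.ext_iff.2 ?_⟩
  exact eq_and_eq_of_sum_smul_add_sum_smul_eq hreg
    (fun j hj ↦ (mul_eq_zero.1 (hslack₁ j)).resolve_right hj)
    (fun j hj ↦ (mul_eq_zero.1 (hslack j)).resolve_right hj) (hφ'₁.symm.trans hφ')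

end Multipliers

section Gradient

variable {E : Type*} [NormedAddCommGroup E] [InnerProductSpace ℝ E] [CompleteSpace E]

variable (E) in
/-- The Riesz isomorphism of a real Hilbert space, as a linear rather than conjugate-linear map. -/
def rieszEquiv : E ≃ₗ[ℝ] StrongDual ℝ E := (InnerProductSpace.toDual ℝ E).toLinearEquiv

theorem hasStrictFDerivAt_rieszEquiv_gradient {f : E → ℝ} {x : E} (hf : ContDiffAt ℝ 1 f x) :
    HasStrictFDerivAt f (rieszEquiv E (gradient f x)) x :=
  (hf.hasStrictFDerivAt one_ne_zero).congr_fderiv ((rieszEquiv E).apply_symm_apply _).symm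

theorem existsUnique_kkt_multipliers_gradient {ι κ : Type*} [Fintype ι] [Fintype κ] {φ : E → ℝ}
    {a : ι → E → ℝ} {b : κ → E → ℝ} {ξ : E} (hφ : DifferentiableAt ℝ φ ξ)
    (ha : ∀ i, ContDiffAt ℝ 1 (a i) ξ) (hb : ∀ j, ContDiffAt ℝ 1 (b j) ξ)
    (hξ : ξ ∈ feasibleSet a b) (hmin : IsLocalMinOn φ (feasibleSet a b) ξ)
    (hreg : LinearIndependent ℝ (Sum.elim (fun i ↦ gradient (a i) ξ)
      fun j : {j // b j ξ = 0} ↦ gradient (b j) ξ)) :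
    ∃! lm : (ι → ℝ) × (κ → ℝ),
      gradient φ ξ = ∑ i, lm.1 i • gradient (a i) ξ + ∑ j, lm.2 j • gradient (b j) ξ ∧
        (∀ j, 0 ≤ lm.2 j) ∧ ∀ j, lm.2 j * b j ξ = 0 := by
  have hreg_dual := hreg.map' (rieszEquiv E).toLinearMap (rieszEquiv E).ker
  rw [Sum.comp_elim] at hreg_dual
  have hkkt := stmt_10_general (φ' := rieszEquiv E (gradient φ ξ)) hφ.hasGradientAt.hasFDerivAt
    (fun i ↦ hasStrictFDerivAt_rieszEquiv_gradient (ha i))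
    (fun j ↦ hasStrictFDerivAt_rieszEquiv_gradient (hb j)) hξ hmin hreg_dual
  simpa only [← map_smul, ← map_sum, ← map_add, EmbeddingLike.apply_eq_iff_eq] using hkkt

end Gradient

/-- Karush–Kuhn–Tucker conditions: at a regular local minimum of a nonlinear
program there exist unique Lagrange multipliers satisfying stationarity,
feasibility, nonnegativity and complementary slackness. -/
theorem stmt_10 {n m p : ℕ}
    (φ : Evec n → ℝ) (a : Evec n → Evec m) (b : Evec n → Evec p)
    (hφ : ContDiff ℝ 1 φ) (ha : ContDiff ℝ 1 a) (hb : ContDiff ℝ 1 b)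
    (ξ : Evec n)
    (hfeas : a ξ = 0 ∧ ∀ j, 0 ≤ b ξ j)
    (hmin : IsLocalMinOn φ {x | a x = 0 ∧ ∀ j, 0 ≤ b x j} ξ)
    (hreg : LinearIndependent ℝ
      (Sum.elim (fun i : Fin m => gradient (fun x => a x i) ξ)
        (fun j : {j : Fin p // b ξ j = 0} => gradient (fun x => b x j.1) ξ))) :
    ∃! lm : (Fin m → ℝ) × (Fin p → ℝ),
      gradient φ ξ - (∑ i, lm.1 i • gradient (fun x => a x i) ξ)
          - (∑ j, lm.2 j • gradient (fun x => b x j) ξ) = 0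
        ∧ a ξ = 0
        ∧ (∀ j, 0 ≤ b ξ j)
        ∧ (∀ j, 0 ≤ lm.2 j)
        ∧ (∀ j, lm.2 j * b ξ j = 0) := by
  have hset : {x | a x = 0 ∧ ∀ j, 0 ≤ b x j} = feasibleSet (fun i x ↦ a x i) fun j x ↦ b x j := by
    ext x
    simp [feasibleSet, PiLp.ext_iff]
  have hkkt := existsUnique_kkt_multipliers_gradient (hφ.differentiable one_ne_zero ξ)
    (fun i ↦ by fun_prop) (fun j ↦ by fun_prop) (hset ▸ hfeas) (hset ▸ hmin) hreg
  simpa only [sub_sub, sub_eq_zero, hfeas, implies_true, true_and] using hkkt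
end
end

section
/- Let h > 0, let L : ℝⁿ × ℝⁿ → ℝ be C¹, let f_L : ℝⁿ × ℝⁿ × ℝᵐ → ℝⁿ be continuous, and fix controls U₁, …, U_s ∈ ℝᵐ. Let coefficients b_i, a_{ij}, b̃_i, ã_{ij} (i, j = 1, …, s) satisfy the symplecticity conditions b_i ã_{ij} + b̃_j a_{ji} = b_i b̃_j and b_i = b̃_i for all i, j. Let V ⊆ ℝⁿ × ℝⁿ be open and suppose there are C¹ functions (q₀,q₁) ↦ (Q_i, Q̇_i, P_i, Ṗ_i, p₀, p₁) on V, i = 1, …, s, satisfying the partitioned Runge–Kutta relations: q₁ = q₀ + h Σ_j b_j Q̇_j, Q_i = q₀ + h Σ_j a_{ij} Q̇_j, P_i = D₂L(Q_i, Q̇_i), p₁ = p₀ + h Σ_j b̃_j Ṗ_j, P_i = p₀ + h Σ_j ã_{ij} Ṗ_j, and Ṗ_i = D₁L(Q_i, Q̇_i) + f_L(Q_i, Q̇_i, U_i). Define on V the discrete Lagrangian L_d(q₀,q₁) = h Σ_i b_i L(Q_i(q₀,q₁), Q̇_i(q₀,q₁)) and discrete forces f_d⁺(q₀,q₁) = h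 Σ_i b_i (∂Q_i/∂q₁)ᵀ · f_L(Q_i, Q̇_i, U_i) and f_d⁻(q₀,q₁) = h Σ_i b_i (∂Q_i/∂q₀)ᵀ · f_L(Q_i, Q̇_i, U_i). Then for all (q₀,q₁) ∈ V: p₀(q₀,q₁) = −D₁L_d(q₀,q₁) − f_d⁻(q₀,q₁) and p₁(q₀,q₁) = D₂L_d(q₀,q₁) + f_d⁺(q₀,q₁); that is, the forced discrete Hamiltonian map generated by (L_d, f_d^±) is exactly the map (q₀,p₀) ↦ (q₁,p₁) of the symplectic partitioned Runge–Kutta method for the forced system. -/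
open scoped RealInnerProductSpace

noncomputable section

/-!
Differentiating the position half of the method in `(q₀, q₁)` shows that the variations of the
stages again form a Runge–Kutta step, from `δq₀` to `δq₁`, with the same coefficients. Symplecticity
makes the pairing of momenta with these variations a summation by parts,
`h ∑ bᵢ (⟨Ṗᵢ, δQᵢ⟩ + ⟨Pᵢ, δQ̇ᵢ⟩) = ⟨p₁, δq₁⟩ - ⟨p₀, δq₀⟩`.
By the stage equations `Pᵢ = D₂L` and `Ṗᵢ = D₁L + f`, the left-hand side is `δL_d` plus the virtual
work `h ∑ bᵢ ⟨fᵢ, δQᵢ⟩` of the force. Reading off the coefficients of `δq₀` and `δq₁` gives the two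
momentum formulas.
-/

open Filter Topology InnerProductSpace

/-- A Runge–Kutta step of size `h` with weights `b` and matrix `a` from `x₀` to `x₁`, with stage
values `X` and stage velocities `Xd`. A partitioned method consists of two such steps, one for the
positions and one for the momenta; no differential equation relating `Xd` to `X` is included. -/
structure IsRKStep {R M ι : Type*} [Semiring R] [AddCommMonoid M] [Module R M] [Fintype ι]
    (h : R) (b : ι → R) (a : ι → ι → R) (x₀ x₁ : M) (X Xd : ι → M) : Prop where
  endpoint : x₁ = x₀ + h • ∑ j, b j • Xd j
  stage : ∀ i, X i = x₀ + h • ∑ j, a i j • Xd j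

/-- The symplecticity conditions for the coefficients `(b, a)` of the position half and `(bt, ta)`
of the momentum half of a partitioned Runge–Kutta method. -/
structure IsSymplecticTableau {R ι : Type*} [Semiring R]
    (b : ι → R) (a : ι → ι → R) (bt : ι → R) (ta : ι → ι → R) : Prop where
  weights_eq : ∀ i, b i = bt i
  mul_add_mul : ∀ i j, b i * ta i j + bt j * a j i = b i * bt j

/-- The discrete Lagrangian `L_d = h ∑ bᵢ L(Qᵢ, Q̇ᵢ)` of a quadrature rule with weights `b`, where
the stages `Q`, `Qd` are functions on `D` (pairs of endpoints `(q₀, q₁)` in the application). -/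
def discreteLagrangian {𝕜 E D ι : Type*} [Semiring 𝕜] [Fintype ι]
    (h : 𝕜) (b : ι → 𝕜) (L : E × E → 𝕜) (Q Qd : ι → D → E) (x : D) : 𝕜 :=
  h * ∑ i, b i * L (Q i x, Qd i x)

/-- The discrete force `h ∑ bᵢ Aᵢᵀ fᵢ`, where `fᵢ` is the force at stage `i` and `Aᵢ` the partial
derivative of that stage in one endpoint: `∂Qᵢ/∂q₀` gives `f_d⁻` and `∂Qᵢ/∂q₁` gives `f_d⁺`. -/
def discreteForce {E F ι : Type*} [NormedAddCommGroup E] [InnerProductSpace ℝ E] [CompleteSpace E]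
    [NormedAddCommGroup F] [InnerProductSpace ℝ F] [CompleteSpace F] [Fintype ι]
    (h : ℝ) (b : ι → ℝ) (A : ι → E →L[ℝ] F) (f : ι → F) : E :=
  h • ∑ i, b i • ContinuousLinearMap.adjoint (A i) (f i)

namespace IsRKStep

theorem sum_pairing_eq_sub {R M N G ι : Type*} [CommSemiring R] [AddCommMonoid M] [Module R M]
    [AddCommMonoid N] [Module R N] [AddCommGroup G] [Module R G] [Fintype ι]
    {h : R} {b bt : ι → R} {a ta : ι → ι → R}
    {q₀ q₁ : N} {Q Qd : ι → N} {p₀ p₁ : M} {P Pd : ι → M}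
    (hab : IsSymplecticTableau b a bt ta)
    (hq : IsRKStep h b a q₀ q₁ Q Qd) (hp : IsRKStep h bt ta p₀ p₁ P Pd) (B : M →ₗ[R] N →ₗ[R] G) :
    h • ∑ i, b i • (B (Pd i) (Q i) + B (P i) (Qd i)) = B p₁ q₁ - B p₀ q₀ := by
  have force_sum : ∑ i, b i • B (Pd i) (Q i)
      = B (∑ i, bt i • Pd i) q₀ + h • ∑ i, ∑ j, (b i * a i j) • B (Pd i) (Qd j) := by
    simp_rw [hq.stage, hab.weights_eq]
    simp [Finset.smul_sum, Finset.sum_add_distrib, mul_smul, smul_comm h]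
  have momentum_sum : ∑ i, b i • B (P i) (Qd i)
      = B p₀ (∑ i, b i • Qd i) + h • ∑ i, ∑ j, (b i * ta i j) • B (Pd j) (Qd i) := by
    simp_rw [hp.stage]
    simp [Finset.smul_sum, Finset.sum_add_distrib, mul_smul, smul_comm h]
  have coeff_eq (i j : ι) : b i * bt j = b j * a j i + b i * ta i j := by
    rw [← hab.mul_add_mul i j, hab.weights_eq j, add_comm]
  have increment_pairing : B (∑ j, bt j • Pd j) (∑ i, b i • Qd i)
      = ∑ i, ∑ j, (b i * a i j) • B (Pd i) (Qd j) + ∑ i, ∑ j, (b i * ta i j) • B (Pd j) (Qd i) :=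
    calc
      _ = ∑ i, ∑ j, (b i * bt j) • B (Pd j) (Qd i) := by simp [Finset.smul_sum, mul_smul]
      _ = ∑ i, ∑ j, (b j * a j i) • B (Pd j) (Qd i)
          + ∑ i, ∑ j, (b i * ta i j) • B (Pd j) (Qd i) := by
        simp only [coeff_eq, add_smul, Finset.sum_add_distrib]
      _ = _ := by rw [Finset.sum_comm]
  simp only [smul_add, Finset.sum_add_distrib, force_sum, momentum_sum, hp.endpoint, hq.endpoint,
    map_add, map_smul, LinearMap.add_apply, LinearMap.smul_apply, increment_pairing]
  abel

theorem of_hasFDerivAt {𝕜 D E ι : Type*} [NontriviallyNormedField 𝕜]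
    [NormedAddCommGroup D] [NormedSpace 𝕜 D] [NormedAddCommGroup E] [NormedSpace 𝕜 E] [Fintype ι]
    {h : 𝕜} {b : ι → 𝕜} {a : ι → ι → 𝕜} {x₀ x₁ : D → E} {X Xd : ι → D → E} {x : D}
    {dx₀ dx₁ : D →L[𝕜] E} {dX dXd : ι → D →L[𝕜] E}
    (hX : ∀ᶠ y in 𝓝 x, IsRKStep h b a (x₀ y) (x₁ y) (X · y) (Xd · y))
    (hx₀ : HasFDerivAt x₀ dx₀ x) (hx₁ : HasFDerivAt x₁ dx₁ x)
    (hdX : ∀ i, HasFDerivAt (X i) (dX i) x) (hdXd : ∀ i, HasFDerivAt (Xd i) (dXd i) x) :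
    IsRKStep h b a dx₀ dx₁ dX dXd := by
  have hasFDerivAt_combination (c : ι → 𝕜) :
      HasFDerivAt (fun y => x₀ y + h • ∑ j, c j • Xd j y) (dx₀ + h • ∑ j, c j • dXd j) x :=
    hx₀.add ((HasFDerivAt.fun_sum fun j _ => (hdXd j).const_smul (c j)).const_smul h)
  exact
    { endpoint := hx₁.unique <|
        (hasFDerivAt_combination b).congr_of_eventuallyEq (hX.mono fun _ hy => hy.endpoint)
      stage := fun i => (hdX i).unique <|
        (hasFDerivAt_combination (a i)).congr_of_eventuallyEq (hX.mono fun _ hy => hy.stage i) }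

protected theorem toDual {E ι : Type*} [NormedAddCommGroup E] [InnerProductSpace ℝ E]
    [CompleteSpace E] [Fintype ι] {h : ℝ} {b : ι → ℝ} {a : ι → ι → ℝ} {x₀ x₁ : E} {X Xd : ι → E}
    (hX : IsRKStep h b a x₀ x₁ X Xd) :
    IsRKStep h b a (toDual ℝ E x₀) (toDual ℝ E x₁) (fun i => toDual ℝ E (X i))
      (fun i => toDual ℝ E (Xd i)) where
  endpoint := by simp [hX.endpoint]
  stage i := by simp [hX.stage i]

end IsRKStep

section PartialDerivatives

variable {𝕜 E F G : Type*} [NontriviallyNormedField 𝕜] [NormedAddCommGroup E] [NormedSpace 𝕜 E]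
  [NormedAddCommGroup F] [NormedSpace 𝕜 F] [NormedAddCommGroup G] [NormedSpace 𝕜 G]
  {f : E × F → G} {f' : E × F →L[𝕜] G} {x : E × F}

theorem fderiv_partial_fst (hf : HasFDerivAt f f' x) :
    fderiv 𝕜 (fun y => f (y, x.2)) x.1 = f' ∘L .inl 𝕜 E F :=
  (hf.comp (f := fun y => (y, x.2)) x.1 (hasFDerivAt_prodMk_left x.1 x.2)).fderiv

theorem fderiv_partial_snd (hf : HasFDerivAt f f' x) :
    fderiv 𝕜 (fun y => f (x.1, y)) x.2 = f' ∘L .inr 𝕜 E F :=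
  (hf.comp (f := fun y => (x.1, y)) x.2 (hasFDerivAt_prodMk_right x.1 x.2)).fderiv

theorem hasFDerivAt_coprod_fderiv_partial (hf : DifferentiableAt 𝕜 f x) :
    HasFDerivAt f ((fderiv 𝕜 (fun y => f (y, x.2)) x.1).coprod
      (fderiv 𝕜 (fun y => f (x.1, y)) x.2)) x := by
  rw [fderiv_partial_fst hf.hasFDerivAt, fderiv_partial_snd hf.hasFDerivAt,
    ContinuousLinearMap.coprod_comp_inl_inr]
  exact hf.hasFDerivAt

end PartialDerivatives

section DiscreteLagrangian

variable {𝕜 E ι : Type*} [NontriviallyNormedField 𝕜] [NormedAddCommGroup E] [NormedSpace 𝕜 E]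
  [Fintype ι] {h : 𝕜} {b bt : ι → 𝕜} {a ta : ι → ι → 𝕜} {L : E × E → 𝕜}

theorem hasFDerivAt_discreteLagrangian {D : Type*} [NormedAddCommGroup D] [NormedSpace 𝕜 D]
    {Q Qd : ι → D → E} {x : D} {dQ dQd : ι → D →L[𝕜] E} {dL : ι → StrongDual 𝕜 (E × E)}
    (hL : ∀ i, HasFDerivAt L (dL i) (Q i x, Qd i x))
    (hQ : ∀ i, HasFDerivAt (Q i) (dQ i) x) (hQd : ∀ i, HasFDerivAt (Qd i) (dQd i) x) :
    HasFDerivAt (discreteLagrangian h b L Q Qd)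
      (h • ∑ i, b i • dL i ∘L (dQ i).prod (dQd i)) x :=
  (HasFDerivAt.fun_sum fun i _ =>
    ((hL i).comp x ((hQ i).prodMk (hQd i))).const_mul (b i)).const_mul h

theorem hasFDerivAt_discreteLagrangian_of_isSymplecticTableau {Q Qd : ι → E × E → E} {x : E × E}
    {dQ dQd : ι → E × E →L[𝕜] E} {p₀ p₁ : StrongDual 𝕜 E} {P Pd f : ι → StrongDual 𝕜 E}
    (hab : IsSymplecticTableau b a bt ta)
    (hq : ∀ᶠ y in 𝓝 x, IsRKStep h b a y.1 y.2 (Q · y) (Qd · y))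
    (hp : IsRKStep h bt ta p₀ p₁ P Pd)
    (hQ : ∀ i, HasFDerivAt (Q i) (dQ i) x) (hQd : ∀ i, HasFDerivAt (Qd i) (dQd i) x)
    (hL : ∀ i, HasFDerivAt L ((Pd i - f i).coprod (P i)) (Q i x, Qd i x)) :
    HasFDerivAt (discreteLagrangian h b L Q Qd)
      (p₁ ∘L .snd 𝕜 E E - p₀ ∘L .fst 𝕜 E E - h • ∑ i, b i • f i ∘L dQ i) x := by
  have variations_step : IsRKStep h b a (.fst 𝕜 E E) (.snd 𝕜 E E) dQ dQd :=
    .of_hasFDerivAt hq hasFDerivAt_fst hasFDerivAt_snd hQ hQd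
  have sum_by_parts : h • ∑ i, b i • (Pd i ∘L dQ i + P i ∘L dQd i)
      = p₁ ∘L .snd 𝕜 E E - p₀ ∘L .fst 𝕜 E E :=
    variations_step.sum_pairing_eq_sub hab hp
      (ContinuousLinearMap.coeLM 𝕜 ∘ₗ (ContinuousLinearMap.compL 𝕜 (E × E) E 𝕜).toLinearMap)
  have stage_variation (i : ι) : (Pd i - f i).coprod (P i) ∘L (dQ i).prod (dQd i)
      = Pd i ∘L dQ i + P i ∘L dQd i - f i ∘L dQ i := by
    ext w <;> simp <;> ring
  refine (hasFDerivAt_discreteLagrangian hL hQ hQd).congr_fderiv ?_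
  simp only [stage_variation, ← sum_by_parts, smul_sub, Finset.sum_sub_distrib]

end DiscreteLagrangian

theorem toDual_discreteForce {E F ι : Type*} [NormedAddCommGroup E] [InnerProductSpace ℝ E]
    [CompleteSpace E] [NormedAddCommGroup F] [InnerProductSpace ℝ F] [CompleteSpace F] [Fintype ι]
    (h : ℝ) (b : ι → ℝ) (A : ι → E →L[ℝ] F) (f : ι → F) :
    toDual ℝ E (discreteForce h b A f) = h • ∑ i, b i • toDual ℝ F (f i) ∘L A i := by
  ext w
  simp [discreteForce, ContinuousLinearMap.adjoint_inner_left]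

theorem stmt_15_general {E C ι : Type*} [NormedAddCommGroup E] [InnerProductSpace ℝ E]
    [CompleteSpace E] [Fintype ι] {h : ℝ} {L : E × E → ℝ} (hL : Differentiable ℝ L)
    (f : E × E × C → E) (U : ι → C) {b bt : ι → ℝ} {a ta : ι → ι → ℝ}
    (hab : IsSymplecticTableau b a bt ta) {V : Set (E × E)} (hV : IsOpen V)
    {Q Qd P Pd : ι → E × E → E} {p₀ p₁ : E × E → E}
    (hQ : ∀ i, DifferentiableOn ℝ (Q i) V) (hQd : ∀ i, DifferentiableOn ℝ (Qd i) V)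
    (hq : ∀ x ∈ V, IsRKStep h b a x.1 x.2 (Q · x) (Qd · x))
    (hp : ∀ x ∈ V, IsRKStep h bt ta (p₀ x) (p₁ x) (P · x) (Pd · x))
    (hP : ∀ x ∈ V, ∀ i, P i x = gradient (fun v => L (Q i x, v)) (Qd i x))
    (hPd : ∀ x ∈ V, ∀ i,
      Pd i x = gradient (fun y => L (y, Qd i x)) (Q i x) + f (Q i x, Qd i x, U i))
    {x : E × E} (hx : x ∈ V) :
    p₀ x = -gradient (fun y => discreteLagrangian h b L Q Qd (y, x.2)) x.1
        - discreteForce h b (fun i => fderiv ℝ (fun y => Q i (y, x.2)) x.1)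
          (fun i => f (Q i x, Qd i x, U i))
      ∧ p₁ x = gradient (fun y => discreteLagrangian h b L Q Qd (x.1, y)) x.2
        + discreteForce h b (fun i => fderiv ℝ (fun y => Q i (x.1, y)) x.2)
          (fun i => f (Q i x, Qd i x, U i)) := by
  have hVx : V ∈ 𝓝 x := hV.mem_nhds hx
  have hdQ (i : ι) : HasFDerivAt (Q i) (fderiv ℝ (Q i) x) x := (hQ i).hasFDerivAt hVx
  have hdL (i : ι) : HasFDerivAt L
      ((toDual ℝ E (Pd i x) - toDual ℝ E (f (Q i x, Qd i x, U i))).coprod (toDual ℝ E (P i x)))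
      (Q i x, Qd i x) := by
    rw [hPd x hx i, hP x hx i, map_add, add_sub_cancel_right, toDual_gradient, toDual_gradient]
    exact hasFDerivAt_coprod_fderiv_partial (hL (Q i x, Qd i x))
  have hdLd : HasFDerivAt (discreteLagrangian h b L Q Qd)
      (toDual ℝ E (p₁ x) ∘L .snd ℝ E E - toDual ℝ E (p₀ x) ∘L .fst ℝ E E
        - h • ∑ i, b i • toDual ℝ E (f (Q i x, Qd i x, U i)) ∘L fderiv ℝ (Q i) x) x :=
    hasFDerivAt_discreteLagrangian_of_isSymplecticTableau hab
      (eventually_of_mem hVx hq) (hp x hx).toDual hdQ (fun i => (hQd i).hasFDerivAt hVx) hdL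
  constructor <;> apply (toDual ℝ E).injective <;> ext w
  · simp [toDual_gradient, toDual_discreteForce, fderiv_partial_fst hdLd,
      fderiv_partial_fst (hdQ _)]
  · simp [toDual_gradient, toDual_discreteForce, fderiv_partial_snd hdLd,
      fderiv_partial_snd (hdQ _)]

/-- The forced discrete Hamiltonian map generated by the discrete Lagrangian
and discrete forces built from a symplectic partitioned Runge–Kutta scheme is
exactly the map `(q₀,p₀) ↦ (q₁,p₁)` of that Runge–Kutta method applied to the
forced system. -/
theorem stmt_15 {n m : ℕ} (h : ℝ) (hh : 0 < h)
    (L : Evec n × Evec n → ℝ) (hL : ContDiff ℝ 1 L)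
    (fL : Evec n × Evec n × Evec m → Evec n) (hfL : Continuous fL)
    (s : ℕ) (U : Fin s → Evec m)
    (b bt : Fin s → ℝ) (aa ta : Fin s → Fin s → ℝ)
    (hsymp : ∀ i j, b i * ta i j + bt j * aa j i = b i * bt j)
    (hbbt : ∀ i, b i = bt i)
    (V : Set (Evec n × Evec n)) (hV : IsOpen V)
    (Q Qd P Pd : Fin s → Evec n × Evec n → Evec n)
    (p0 p1 : Evec n × Evec n → Evec n)
    (hQreg : ∀ i, ContDiffOn ℝ 1 (Q i) V) (hQdreg : ∀ i, ContDiffOn ℝ 1 (Qd i) V)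
    (hPreg : ∀ i, ContDiffOn ℝ 1 (P i) V) (hPdreg : ∀ i, ContDiffOn ℝ 1 (Pd i) V)
    (hp0reg : ContDiffOn ℝ 1 p0 V) (hp1reg : ContDiffOn ℝ 1 p1 V)
    (hq1 : ∀ x ∈ V, x.2 = x.1 + h • ∑ j, b j • Qd j x)
    (hQi : ∀ x ∈ V, ∀ i, Q i x = x.1 + h • ∑ j, aa i j • Qd j x)
    (hPi : ∀ x ∈ V, ∀ i, P i x = gradient (fun v => L (Q i x, v)) (Qd i x))
    (hp1e : ∀ x ∈ V, p1 x = p0 x + h • ∑ j, bt j • Pd j x)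
    (hPi2 : ∀ x ∈ V, ∀ i, P i x = p0 x + h • ∑ j, ta i j • Pd j x)
    (hPdi : ∀ x ∈ V, ∀ i, Pd i x
      = gradient (fun y => L (y, Qd i x)) (Q i x) + fL (Q i x, Qd i x, U i))
    (Ld : Evec n × Evec n → ℝ)
    (hLd : ∀ x, Ld x = h * ∑ i, b i * L (Q i x, Qd i x))
    (fdp fdm : Evec n × Evec n → Evec n)
    (hfdp : ∀ x : Evec n × Evec n, fdp x = h • ∑ i, b i •
      (ContinuousLinearMap.adjoint (fderiv ℝ (fun y => Q i (x.1, y)) x.2))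
        (fL (Q i x, Qd i x, U i)))
    (hfdm : ∀ x : Evec n × Evec n, fdm x = h • ∑ i, b i •
      (ContinuousLinearMap.adjoint (fderiv ℝ (fun y => Q i (y, x.2)) x.1))
        (fL (Q i x, Qd i x, U i))) :
    ∀ x ∈ V,
      p0 x = -gradient (fun y => Ld (y, x.2)) x.1 - fdm x
      ∧ p1 x = gradient (fun y => Ld (x.1, y)) x.2 + fdp x := by
  intro x hx
  rw [hfdm, hfdp, (funext hLd : Ld = discreteLagrangian h b L Q Qd)]
  exact stmt_15_general (hL.differentiable one_ne_zero) fL U ⟨hbbt, hsymp⟩ hV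
    (fun i => (hQreg i).differentiableOn one_ne_zero)
    (fun i => (hQdreg i).differentiableOn one_ne_zero)
    (fun y hy => ⟨hq1 y hy, hQi y hy⟩) (fun y hy => ⟨hp1e y hy, hPi2 y hy⟩) hPi hPdi hx
end
end
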